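/- Assume the Carleman condition on ν. For a matrix sequence S = (S_α)_{α∈ℕⁿ} ⊂ S^p and C > 0, the following are equivalent: (i) S has a p×p PSD matrix-valued representing measure supported on X ∩ [−C,C]ⁿ, where X = {x : G(x,y) ⪰ 0 ∀ y ∈ Y}; (ii) M(S) ⪰ 0, M^ν(G S) ⪰ 0, and there is C₀ > 0 with ‖S_α‖ ≤ C₀ C^{|α|} for all α. -/

import Mathlib

open MeasureTheory MvPolynomial Matrix Finset

noncomputable section

/-- A polynomial matrix is an SOS matrix if it factors as `Tᵀ * T`. -/
def IsSOSMatrix {σ : Type*} {ι : Type*} [Fintype ι]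
    (M : Matrix ι ι (MvPolynomial σ ℝ)) : Prop :=
  ∃ (l : ℕ) (T : Matrix (Fin l) ι (MvPolynomial σ ℝ)), M = Tᵀ * T

/-- A polynomial is a sum of squares. -/
def IsSOSPoly {σ : Type*} (f : MvPolynomial σ ℝ) : Prop :=
  ∃ (l : ℕ) (g : Fin l → MvPolynomial σ ℝ), f = ∑ i, (g i) ^ 2

/-- The block-trace bilinear map `⟨A,B⟩_p = Tr_p (Aᵀ (I_p ⊗ B))`. -/
def lram {R : Type*} [CommSemiring R] {ιp ιq : Type*} [Fintype ιq]
    (A : Matrix (ιp × ιq) (ιp × ιq) R) (B : Matrix ιq ιq R) :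
    Matrix ιp ιp R :=
  Matrix.of fun i j => ∑ a : ιq, ∑ c : ιq, A (j, c) (i, a) * B c a

/-- The `x`-part of an exponent in the variables `x ⊕ y`. -/
def xPart {n m : ℕ} (d : (Fin n ⊕ Fin m) →₀ ℕ) : Fin n →₀ ℕ :=
  Finsupp.comapDomain Sum.inl d Sum.inl_injective.injOn

/-- Integrate out the `y`-variables of a polynomial in `(x, y)` against the measure `ν`:
`∫_Y Σ_β H_β(x) y^β dν := Σ_β H_β(x) ∫_Y y^β dν`. -/
def integY {n m : ℕ} (ν : Measure (Fin m → ℝ))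
    (q : MvPolynomial (Fin n ⊕ Fin m) ℝ) : MvPolynomial (Fin n) ℝ :=
  ∑ d ∈ q.support, MvPolynomial.monomial (xPart d)
    (q.coeff d * ∫ y, ∏ j : Fin m, (y j) ^ (d (Sum.inr j)) ∂ν)

/-- All polynomial moments of `ν` are finite. -/
def momentsFinite {m : ℕ} (ν : Measure (Fin m → ℝ)) : Prop :=
  ∀ h : MvPolynomial (Fin m) ℝ, Integrable (fun y => |MvPolynomial.eval y h|) ν

/-- `ν` has support exactly `Y`. -/
def hasSupport {m : ℕ} (ν : Measure (Fin m → ℝ)) (Y : Set (Fin m → ℝ)) : Prop :=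
  ν Yᶜ = 0 ∧ ∀ U : Set (Fin m → ℝ), IsOpen U → (U ∩ Y).Nonempty → 0 < ν U

/-- The multivariate Carleman condition on `ν`. -/
def Carleman {m : ℕ} (ν : Measure (Fin m → ℝ)) : Prop :=
  ∀ j : Fin m, ¬ Summable (fun d : ℕ =>
    (∫ y, (y j) ^ (2 * (d + 1)) ∂ν) ^ (-(1 : ℝ) / (2 * (d + 1))))

/-- Evaluate a polynomial matrix at a point. -/
def evalMat {σ : Type*} {ι : Type*} (x : σ → ℝ)
    (M : Matrix ι ι (MvPolynomial σ ℝ)) : Matrix ι ι ℝ :=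
  M.map (MvPolynomial.eval x)

/-- The spectral (L²-operator) norm of a real matrix. -/
def specNorm {ι : Type*} [Fintype ι] [DecidableEq ι] (A : Matrix ι ι ℝ) : ℝ :=
  ‖(Matrix.toEuclideanLin A).toContinuousLinearMap‖

/-- Degree of a polynomial matrix. -/
def matDeg {ι σ : Type*} [Fintype ι] (M : Matrix ι ι (MvPolynomial σ ℝ)) : ℕ :=
  Finset.univ.sup fun i => Finset.univ.sup fun j => (M i j).totalDegree

/-- Degree in `x` of a polynomial in `(x,y)`. -/
def degX {n m : ℕ} (q : MvPolynomial (Fin n ⊕ Fin m) ℝ) : ℕ :=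
  q.support.sup fun d => ∑ i : Fin n, d (Sum.inl i)

/-- Degree in `y` of a polynomial in `(x,y)`. -/
def degY {n m : ℕ} (q : MvPolynomial (Fin n ⊕ Fin m) ℝ) : ℕ :=
  q.support.sup fun d => ∑ j : Fin m, d (Sum.inr j)

def matDegX {ι : Type*} {n m : ℕ} [Fintype ι]
    (M : Matrix ι ι (MvPolynomial (Fin n ⊕ Fin m) ℝ)) : ℕ :=
  Finset.univ.sup fun i => Finset.univ.sup fun j => degX (M i j)

def matDegY {ι : Type*} {n m : ℕ} [Fintype ι]
    (M : Matrix ι ι (MvPolynomial (Fin n ⊕ Fin m) ℝ)) : ℕ :=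
  Finset.univ.sup fun i => Finset.univ.sup fun j => degY (M i j)

/-- Homogeneity in `x` of a polynomial in `(x,y)`. -/
def IsHomogeneousX {n m : ℕ} (q : MvPolynomial (Fin n ⊕ Fin m) ℝ) (k : ℕ) : Prop :=
  ∀ d ∈ q.support, ∑ i : Fin n, d (Sum.inl i) = k

/-- Positive semidefiniteness of the full (infinite) moment matrix `M(S)`:
every finite principal block submatrix is PSD. -/
def MomentPSD {n p : ℕ} (S : (Fin n →₀ ℕ) → Matrix (Fin p) (Fin p) ℝ) : Prop :=
  ∀ (N : ℕ) (idx : Fin N → (Fin n →₀ ℕ)),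
    (Matrix.of fun a b : Fin N × Fin p => S (idx a.1 + idx b.1) a.2 b.2).PosSemidef

/-- Exponents of degree at most `d` in `n` variables. -/
def Expo (n d : ℕ) := {a : Fin n → Fin (d + 1) // ∑ i, (a i : ℕ) ≤ d}

instance (n d : ℕ) : Fintype (Expo n d) := by unfold Expo; infer_instance
instance (n d : ℕ) : DecidableEq (Expo n d) := by unfold Expo; infer_instance

def expF {n d : ℕ} (a : Fin n → Fin (d + 1)) : Fin n →₀ ℕ :=
  Finsupp.equivFunOnFinite.symm (fun i => (a i : ℕ))

/-- Truncated moment matrix `M_d(S)`. -/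
def momentMat {n p : ℕ} (S : (Fin n →₀ ℕ) → Matrix (Fin p) (Fin p) ℝ) (d : ℕ) :
    Matrix (Expo n d × Fin p) (Expo n d × Fin p) ℝ :=
  Matrix.of fun a b => S (expF a.1.1 + expF b.1.1) a.2 b.2

/-- Truncated localizing matrix `M^ν_{d,k}(G S)`. -/
def locMat {n m p q : ℕ} (ν : Measure (Fin m → ℝ))
    (G : Matrix (Fin q) (Fin q) (MvPolynomial (Fin n ⊕ Fin m) ℝ))
    (S : (Fin n →₀ ℕ) → Matrix (Fin p) (Fin p) ℝ) (d k : ℕ) :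
    Matrix ((Expo n d × Expo m k) × (Fin p × Fin q))
           ((Expo n d × Expo m k) × (Fin p × Fin q)) ℝ :=
  Matrix.of fun r c =>
    ∑ e ∈ (G r.2.2 c.2.2).support,
      (∫ y, ∏ j : Fin m, (y j) ^ (e (Sum.inr j) + (r.1.2.1 j : ℕ) + (c.1.2.1 j : ℕ)) ∂ν) *
      ((G r.2.2 c.2.2).coeff e *
        S (expF r.1.1.1 + expF c.1.1.1 + xPart e) r.2.1 c.2.1)

/-- The Riesz functional `L_S(H) = Σ_α tr(H_α S_α)`. -/
def RieszL {n p : ℕ} (S : (Fin n →₀ ℕ) → Matrix (Fin p) (Fin p) ℝ)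
    (H : Matrix (Fin p) (Fin p) (MvPolynomial (Fin n) ℝ)) : ℝ :=
  ∑ i, ∑ j, ∑ α ∈ (H i j).support, (H i j).coeff α * S α j i

end

/-- Integral of a function against a signed measure, via the Jordan decomposition. -/
noncomputable def sInt {α : Type*} [MeasurableSpace α] (s : MeasureTheory.SignedMeasure α)
    (f : α → ℝ) : ℝ :=
  (∫ x, f x ∂s.toJordanDecomposition.posPart) -
    (∫ x, f x ∂s.toJordanDecomposition.negPart)

/-! ### Carleman's inequality -/

lemma sum_averages_eq (b : ℕ → ℝ) (N : ℕ) :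
    ∑ n ∈ range N, (1 / (((n : ℝ) + 1) * (n + 2))) * ∑ k ∈ range (n + 1), b k =
      ∑ k ∈ range N, b k / ((k : ℝ) + 1) - (∑ k ∈ range N, b k) / ((N : ℝ) + 1) := by
  induction N with
  | zero => simp
  | succ N ih =>
    rw [sum_range_succ, ih, sum_range_succ (fun k => b k / ((k : ℝ) + 1)), sum_range_succ b N]
    push_cast
    have h1 : ((N : ℝ) + 1) ≠ 0 := by positivity
    have h2 : ((N : ℝ) + 2) ≠ 0 := by positivity
    have h3 : ((N : ℝ) + 1 + 1) ≠ 0 := by positivity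
    field_simp
    ring

lemma prod_carleman_weights (n : ℕ) :
    ∏ k ∈ range n, (((k : ℝ) + 2) ^ (k + 1) / ((k : ℝ) + 1) ^ k) = ((n : ℝ) + 1) ^ n := by
  induction n with
  | zero => simp
  | succ n ih =>
    rw [prod_range_succ, ih]
    have h1 : ((n : ℝ) + 1) ^ n ≠ 0 := by positivity
    push_cast
    field_simp
    ring

lemma carleman_weight_le (k : ℕ) :
    ((k : ℝ) + 2) ^ (k + 1) / ((k : ℝ) + 1) ^ k ≤ Real.exp 1 * ((k : ℝ) + 1) := by
  have h1 : (0 : ℝ) < (k : ℝ) + 1 := by positivity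
  have h2 : ((k : ℝ) + 2) ^ (k + 1) / ((k : ℝ) + 1) ^ k =
      (1 / ((k : ℝ) + 1) + 1) ^ (k + 1) * ((k : ℝ) + 1) := by
    have : 1 / ((k : ℝ) + 1) + 1 = ((k : ℝ) + 2) / ((k : ℝ) + 1) := by
      field_simp; ring
    rw [this, div_pow]
    field_simp
    ring
  rw [h2]
  gcongr
  calc (1 / ((k : ℝ) + 1) + 1) ^ (k + 1) ≤ Real.exp (1 / ((k : ℝ) + 1)) ^ (k + 1) := by
        gcongr
        exact Real.add_one_le_exp _
    _ = Real.exp 1 := by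
        rw [← Real.exp_nat_mul]
        push_cast
        congr 1
        field_simp

lemma summable_geom_mean {a : ℕ → ℝ} (ha : ∀ n, 0 ≤ a n) (hs : Summable a) :
    Summable fun n : ℕ => (∏ k ∈ range (n + 1), a k) ^ (1 / ((n : ℝ) + 1)) := by
  set c : ℕ → ℝ := fun k => ((k : ℝ) + 2) ^ (k + 1) / ((k : ℝ) + 1) ^ k with hc
  have hcpos : ∀ k, 0 < c k := fun k => by simp only [hc]; positivity
  have hterm : ∀ n : ℕ, (∏ k ∈ range (n + 1), a k) ^ (1 / ((n : ℝ) + 1)) ≤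
      (1 / (((n : ℝ) + 1) * (n + 2))) * ∑ k ∈ range (n + 1), a k * c k := by
    intro n
    have hn : (0 : ℝ) < (n : ℝ) + 1 := by positivity
    have hgm := Real.geom_mean_le_arith_mean_weighted (range (n + 1))
      (fun _ => 1 / ((n : ℝ) + 1)) (fun k => a k * c k) (fun _ _ => by positivity)
      (by simp; field_simp) (fun k _ => mul_nonneg (ha k) (hcpos k).le)
    rw [Real.finsetProd_rpow _ _ (fun k _ => mul_nonneg (ha k) (hcpos k).le),
      prod_mul_distrib, prod_carleman_weights,
      Real.mul_rpow (prod_nonneg fun k _ => ha k) (by positivity)] at hgm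
    have hroot : ((((n + 1 : ℕ) : ℝ) + 1) ^ (n + 1)) ^ (1 / ((n : ℝ) + 1)) = (n : ℝ) + 2 := by
      rw [← Real.rpow_natCast, ← Real.rpow_mul (by positivity)]
      push_cast
      rw [mul_one_div_cancel hn.ne', Real.rpow_one]
      ring
    rw [hroot, ← mul_sum] at hgm
    rw [← le_div_iff₀ (by positivity)] at hgm
    refine hgm.trans (le_of_eq ?_)
    field_simp
  refine summable_of_sum_range_le (c := Real.exp 1 * ∑' n, a n)
    (fun n => Real.rpow_nonneg (prod_nonneg fun k _ => ha k) _) fun N => ?_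
  calc _ ≤ ∑ n ∈ range N, (1 / (((n : ℝ) + 1) * (n + 2))) * ∑ k ∈ range (n + 1), a k * c k :=
        sum_le_sum fun n _ => hterm n
    _ ≤ ∑ k ∈ range N, a k * c k / ((k : ℝ) + 1) := by
        rw [sum_averages_eq]
        have : 0 ≤ (∑ k ∈ range N, a k * c k) / ((N : ℝ) + 1) :=
          div_nonneg (sum_nonneg fun k _ => mul_nonneg (ha k) (hcpos k).le) (by positivity)
        linarith
    _ ≤ ∑ k ∈ range N, Real.exp 1 * a k := by
        refine sum_le_sum fun k _ => ?_
        rw [div_le_iff₀ (by positivity)]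
        have := mul_le_mul_of_nonneg_left (carleman_weight_le k) (ha k)
        linarith
    _ ≤ Real.exp 1 * ∑' n, a n := by
        rw [← mul_sum]
        gcongr
        exact hs.sum_le_tsum _ fun n _ => ha n

/-- The Cauchy–Schwarz inequality for a functional that is nonnegative on squares. -/
lemma sq_le_mul_of_nonneg_sq {R : Type*} [CommRing R] [Algebra ℝ R] {T : R →ₗ[ℝ] ℝ}
    (hT : ∀ p, 0 ≤ T (p * p)) (p r : R) : T (p * r) ^ 2 ≤ T (p * p) * T (r * r) := by
  have h : ∀ s : ℝ, 0 ≤ T (r * r) * (s * s) + 2 * T (p * r) * s + T (p * p) := by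
    intro s
    have := hT (p + s • r)
    have he : (p + s • r) * (p + s • r) = p * p + (2 * s) • (p * r) + (s * s) • (r * r) := by
      simp only [Algebra.smul_def, map_mul, map_ofNat]
      ring
    rw [he, map_add, map_add, map_smul, map_smul, smul_eq_mul, smul_eq_mul] at this
    linarith
  have := discrim_le_zero h
  rw [discrim] at this
  nlinarith

/-! ### Orthogonal polynomials of a positive functional on `ℝ[X]` -/

/-- The consecutive monic orthogonal polynomials `(Pₙ, Pₙ₋₁)` of the functional `T`,
built by the three-term recurrence. -/
noncomputable def orthPair (T : Polynomial ℝ →ₗ[ℝ] ℝ) : ℕ → Polynomial ℝ × Polynomial ℝ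
  | 0 => (1, 0)
  | n + 1 =>
    let P := (orthPair T n).1
    let Q := (orthPair T n).2
    ((Polynomial.X - Polynomial.C (T (Polynomial.X * P * P) / T (P * P))) * P
      - Polynomial.C (T (P * P) / T (Q * Q)) * Q, P)

/-- The monic orthogonal polynomials of the functional `T`. -/
noncomputable def orthPoly (T : Polynomial ℝ →ₗ[ℝ] ℝ) (n : ℕ) : Polynomial ℝ := (orthPair T n).1

section OrthPoly

variable (T : Polynomial ℝ →ₗ[ℝ] ℝ)

lemma orthPoly_zero : orthPoly T 0 = 1 := rfl

lemma orthPoly_one :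
    orthPoly T 1 = (Polynomial.X - Polynomial.C (T (Polynomial.X * orthPoly T 0 * orthPoly T 0) /
      T (orthPoly T 0 * orthPoly T 0))) * orthPoly T 0 := by
  simp [orthPoly, orthPair]

lemma orthPoly_succ_succ (n : ℕ) :
    orthPoly T (n + 2) = (Polynomial.X - Polynomial.C
      (T (Polynomial.X * orthPoly T (n + 1) * orthPoly T (n + 1)) /
        T (orthPoly T (n + 1) * orthPoly T (n + 1)))) * orthPoly T (n + 1)
      - Polynomial.C (T (orthPoly T (n + 1) * orthPoly T (n + 1)) /
        T (orthPoly T n * orthPoly T n)) * orthPoly T n := rfl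

lemma orthPoly_monic_natDegree (n : ℕ) :
    (orthPoly T n).Monic ∧ (orthPoly T n).natDegree = n := by
  induction n using Nat.strong_induction_on with
  | _ n ih =>
    match n with
    | 0 => simp [orthPoly_zero]
    | 1 =>
      rw [orthPoly_one, orthPoly_zero, mul_one]
      exact ⟨Polynomial.monic_X_sub_C _, Polynomial.natDegree_X_sub_C _⟩
    | n + 2 =>
      obtain ⟨h1, d1⟩ := ih (n + 1) (by omega)
      obtain ⟨h0, d0⟩ := ih n (by omega)
      rw [orthPoly_succ_succ]
      set a := T (Polynomial.X * orthPoly T (n + 1) * orthPoly T (n + 1)) /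
        T (orthPoly T (n + 1) * orthPoly T (n + 1))
      set c := T (orthPoly T (n + 1) * orthPoly T (n + 1)) / T (orthPoly T n * orthPoly T n)
      have hm : ((Polynomial.X - Polynomial.C a) * orthPoly T (n + 1)).Monic :=
        (Polynomial.monic_X_sub_C a).mul h1
      have hd : ((Polynomial.X - Polynomial.C a) * orthPoly T (n + 1)).natDegree = n + 2 := by
        rw [(Polynomial.monic_X_sub_C a).natDegree_mul h1, Polynomial.natDegree_X_sub_C, d1]
        omega
      have hlt : (Polynomial.C c * orthPoly T n).natDegree <
          ((Polynomial.X - Polynomial.C a) * orthPoly T (n + 1)).natDegree := by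
        rw [hd]
        exact (Polynomial.natDegree_C_mul_le _ _).trans_lt (by omega)
      exact ⟨hm.sub_of_left (Polynomial.degree_lt_degree hlt),
        (Polynomial.natDegree_sub_eq_left_of_natDegree_lt hlt).trans hd⟩

variable {T}

lemma orthPoly_sq_pos (hT : ∀ p : Polynomial ℝ, p ≠ 0 → 0 < T (p * p)) (n : ℕ) :
    0 < T (orthPoly T n * orthPoly T n) :=
  hT _ (orthPoly_monic_natDegree T n).1.ne_zero

lemma exists_X_mul_orthPoly (k : ℕ) : ∃ a c : ℝ,
    Polynomial.X * orthPoly T k = orthPoly T (k + 1) + Polynomial.C a * orthPoly T k +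
      Polynomial.C c * orthPoly T (k - 1) := by
  match k with
  | 0 =>
    refine ⟨T (Polynomial.X * orthPoly T 0 * orthPoly T 0) / T (orthPoly T 0 * orthPoly T 0), 0, ?_⟩
    rw [orthPoly_one, sub_mul, map_zero, zero_mul, add_zero, sub_add_cancel]
  | k + 1 =>
    refine ⟨T (Polynomial.X * orthPoly T (k + 1) * orthPoly T (k + 1)) /
      T (orthPoly T (k + 1) * orthPoly T (k + 1)),
      T (orthPoly T (k + 1) * orthPoly T (k + 1)) / T (orthPoly T k * orthPoly T k), ?_⟩
    rw [orthPoly_succ_succ, Nat.add_sub_cancel, sub_mul]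
    ring

lemma map_C_mul (a : ℝ) (p : Polynomial ℝ) : T (Polynomial.C a * p) = a * T p := by
  rw [Polynomial.C_mul', map_smul, smul_eq_mul]

lemma orthPoly_orthogonal (hT : ∀ p : Polynomial ℝ, p ≠ 0 → 0 < T (p * p)) (n : ℕ) :
    ∀ k < n, T (orthPoly T n * orthPoly T k) = 0 := by
  induction n using Nat.strong_induction_on with
  | _ n ih =>
    match n with
    | 0 => simp
    | 1 =>
      intro k hk
      obtain rfl : k = 0 := by omega
      have h0 := (orthPoly_sq_pos hT 0).ne'
      rw [orthPoly_one, sub_mul, sub_mul, map_sub, mul_assoc (Polynomial.C _), map_C_mul,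
        div_mul_cancel₀ _ h0, sub_self]
    | n + 2 =>
      intro k hk
      have h1 := (orthPoly_sq_pos hT (n + 1)).ne'
      have h0 := (orthPoly_sq_pos hT n).ne'
      rw [orthPoly_succ_succ, sub_mul, sub_mul, sub_mul, map_sub, map_sub,
        mul_assoc (Polynomial.C _), mul_assoc (Polynomial.C _), map_C_mul, map_C_mul]
      rcases lt_trichotomy k n with hkn | rfl | hkn
      · obtain ⟨a, c, hac⟩ := exists_X_mul_orthPoly (T := T) k
        rw [ih (n + 1) (by omega) k (by omega), ih n (by omega) k hkn,
          mul_comm Polynomial.X, mul_assoc, hac, mul_add, mul_add, map_add, map_add,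
          mul_left_comm, mul_left_comm _ (Polynomial.C c), map_C_mul, map_C_mul,
          ih (n + 1) (by omega) (k + 1) (by omega), ih (n + 1) (by omega) k (by omega),
          ih (n + 1) (by omega) (k - 1) (by omega)]
        ring
      · obtain ⟨a, c, hac⟩ := exists_X_mul_orthPoly (T := T) k
        have hz : T (Polynomial.C c * (orthPoly T (k + 1) * orthPoly T (k - 1))) = 0 := by
          rw [map_C_mul, ih (k + 1) (by omega) (k - 1) (by omega), mul_zero]
        rw [ih (k + 1) (by omega) k (by omega), div_mul_cancel₀ _ h0,
          mul_comm Polynomial.X, mul_assoc, hac, mul_add, mul_add, map_add, map_add,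
          mul_left_comm, mul_left_comm _ (Polynomial.C c), map_C_mul, hz,
          ih (k + 1) (by omega) k (by omega)]
        ring
      · obtain rfl : k = n + 1 := by omega
        rw [div_mul_cancel₀ _ h1, mul_comm (orthPoly T n) (orthPoly T (n + 1)),
          ih (n + 1) (by omega) n (by omega)]
        ring

lemma orthPoly_mul_X_pow (hT : ∀ p : Polynomial ℝ, p ≠ 0 → 0 < T (p * p)) (n j : ℕ) :
    ∀ k, (j + k < n → T (orthPoly T n * (Polynomial.X ^ j * orthPoly T k)) = 0) ∧
      (j + k = n → T (orthPoly T n * (Polynomial.X ^ j * orthPoly T k)) =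
        T (orthPoly T n * orthPoly T n)) := by
  induction j with
  | zero =>
    intro k
    simp only [zero_add, pow_zero, one_mul]
    exact ⟨orthPoly_orthogonal hT n k, fun h => by rw [h]⟩
  | succ j ih =>
    intro k
    obtain ⟨a, c, hac⟩ := exists_X_mul_orthPoly (T := T) k
    have hexp : T (orthPoly T n * (Polynomial.X ^ (j + 1) * orthPoly T k)) =
        T (orthPoly T n * (Polynomial.X ^ j * orthPoly T (k + 1))) +
        a * T (orthPoly T n * (Polynomial.X ^ j * orthPoly T k)) +
        c * T (orthPoly T n * (Polynomial.X ^ j * orthPoly T (k - 1))) := by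
      rw [← map_C_mul, ← map_C_mul, ← map_add, ← map_add, pow_succ, mul_assoc, hac]
      congr 1
      ring
    rw [hexp]
    constructor
    · intro h
      rw [(ih (k + 1)).1 (by omega), (ih k).1 (by omega), (ih (k - 1)).1 (by omega)]
      ring
    · intro h
      rw [(ih (k + 1)).2 (by omega), (ih k).1 (by omega), (ih (k - 1)).1 (by omega)]
      ring

lemma orthPoly_sq_le (hT : ∀ p : Polynomial ℝ, p ≠ 0 → 0 < T (p * p)) (n : ℕ) :
    T (orthPoly T n * orthPoly T n) ≤ T (Polynomial.X ^ (2 * n)) := by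
  have hT0 : ∀ p : Polynomial ℝ, 0 ≤ T (p * p) := fun p => by
    by_cases hp : p = 0
    · simp [hp]
    · exact (hT p hp).le
  have h1 := (orthPoly_mul_X_pow hT n n 0).2 (by omega)
  rw [orthPoly_zero, mul_one] at h1
  have h2 := sq_le_mul_of_nonneg_sq hT0 (orthPoly T n) (Polynomial.X ^ n)
  rw [h1, ← pow_add, ← two_mul, sq] at h2
  exact le_of_mul_le_mul_left h2 (orthPoly_sq_pos hT n)

lemma christoffel_darboux (hT : ∀ p : Polynomial ℝ, p ≠ 0 → 0 < T (p * p)) (z : ℂ) (n : ℕ) :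
    z.im * ∑ k ∈ range (n + 1), Complex.normSq (Polynomial.aeval z (orthPoly T k)) /
        T (orthPoly T k * orthPoly T k) =
      (Polynomial.aeval z (orthPoly T (n + 1)) *
        (starRingEnd ℂ) (Polynomial.aeval z (orthPoly T n))).im /
          T (orthPoly T n * orthPoly T n) := by
  induction n with
  | zero =>
    rw [orthPoly_one]
    simp [orthPoly_zero]
    ring
  | succ n ih =>
    rw [sum_range_succ, mul_add, ih, orthPoly_succ_succ]
    have h1 := (orthPoly_sq_pos hT (n + 1)).ne'
    have h0 := (orthPoly_sq_pos hT n).ne'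
    set P := Polynomial.aeval z (orthPoly T (n + 1))
    set Q := Polynomial.aeval z (orthPoly T n)
    simp only [map_sub, map_mul, Polynomial.aeval_X, Polynomial.aeval_C, Complex.coe_algebraMap]
    simp only [Complex.sub_im, Complex.sub_re, Complex.mul_im, Complex.mul_re, Complex.conj_re,
      Complex.conj_im, Complex.ofReal_re, Complex.ofReal_im, Complex.normSq_apply]
    field_simp
    ring

end OrthPoly

section Christoffel

variable {T : Polynomial ℝ →ₗ[ℝ] ℝ}

lemma rpow_le_max_one {x t : ℝ} (hx : 0 ≤ x) (ht0 : 0 ≤ t) (ht1 : t ≤ 1) : x ^ t ≤ max 1 x := by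
  rcases le_total x 1 with h | h
  · exact (Real.rpow_le_one hx h ht0).trans (le_max_left _ _)
  · calc x ^ t ≤ x ^ (1 : ℝ) := Real.rpow_le_rpow_of_exponent_le h ht1
      _ = x := Real.rpow_one x
      _ ≤ _ := le_max_right _ _

lemma sqrt_ratio_le (hT : ∀ p : Polynomial ℝ, p ≠ 0 → 0 < T (p * p)) {z : ℂ} (hz : z.im = 1)
    (n : ℕ) :
    √(T (orthPoly T n * orthPoly T n) / T (orthPoly T (n + 1) * orthPoly T (n + 1))) ≤
      T (orthPoly T 0 * orthPoly T 0) *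
      (Complex.normSq (Polynomial.aeval z (orthPoly T n)) / T (orthPoly T n * orthPoly T n) +
        Complex.normSq (Polynomial.aeval z (orthPoly T (n + 1))) /
          T (orthPoly T (n + 1) * orthPoly T (n + 1))) := by
  have hcd := christoffel_darboux hT z n
  rw [hz, one_mul] at hcd
  have h0 := orthPoly_sq_pos hT 0
  have h1 := orthPoly_sq_pos hT n
  have h2 := orthPoly_sq_pos hT (n + 1)
  have hle : 1 / T (orthPoly T 0 * orthPoly T 0) ≤
      ∑ k ∈ range (n + 1), Complex.normSq (Polynomial.aeval z (orthPoly T k)) /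
        T (orthPoly T k * orthPoly T k) := by
    have := single_le_sum (f := fun k => Complex.normSq (Polynomial.aeval z (orthPoly T k)) /
        T (orthPoly T k * orthPoly T k)) (s := range (n + 1)) (a := 0)
        (fun k _ => div_nonneg (Complex.normSq_nonneg _) (orthPoly_sq_pos hT k).le) (by simp)
    simpa [orthPoly_zero] using this
  rw [hcd] at hle
  have him := (Complex.abs_im_le_norm (Polynomial.aeval z (orthPoly T (n + 1)) *
        (starRingEnd ℂ) (Polynomial.aeval z (orthPoly T n))))
  rw [norm_mul, RCLike.norm_conj] at him
  rw [Complex.normSq_eq_norm_sq, Complex.normSq_eq_norm_sq]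
  set a := ‖Polynomial.aeval z (orthPoly T n)‖ with ha
  set b := ‖Polynomial.aeval z (orthPoly T (n + 1))‖ with hb
  set h := T (orthPoly T n * orthPoly T n)
  set h' := T (orthPoly T (n + 1) * orthPoly T (n + 1))
  set k := T (orthPoly T 0 * orthPoly T 0)
  have hab : 1 / k ≤ b * a / h := hle.trans (by gcongr; exact (le_abs_self _).trans him)
  have hr : √(h / h') ≤ k * (b * a / h) * √(h / h') := by
    have : 1 ≤ k * (b * a / h) := by
      rw [div_le_iff₀ h0] at hab; linarith
    nlinarith [Real.sqrt_nonneg (h / h')]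
  refine hr.trans ?_
  rw [mul_assoc]
  gcongr
  rw [Real.sqrt_div h1.le]
  obtain ⟨s, hspos, hsh⟩ : ∃ s, 0 < s ∧ h = s ^ 2 :=
    ⟨√h, Real.sqrt_pos.2 h1, (Real.sq_sqrt h1.le).symm⟩
  obtain ⟨t, htpos, hth⟩ : ∃ t, 0 < t ∧ h' = t ^ 2 :=
    ⟨√h', Real.sqrt_pos.2 h2, (Real.sq_sqrt h2.le).symm⟩
  rw [hth, hsh, Real.sqrt_sq hspos.le, Real.sqrt_sq htpos.le]
  have e1 : b * a / s ^ 2 * (s / t) = (a / s) * (b / t) := by field_simp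
  rw [e1, ← div_pow, ← div_pow]
  nlinarith [sq_nonneg (a / s - b / t), sq_nonneg (a / s), sq_nonneg (b / t)]

lemma prod_sqrt_ratio (hT : ∀ p : Polynomial ℝ, p ≠ 0 → 0 < T (p * p)) (n : ℕ) :
    ∏ k ∈ range n, √(T (orthPoly T k * orthPoly T k) /
      T (orthPoly T (k + 1) * orthPoly T (k + 1))) =
      √(T (orthPoly T 0 * orthPoly T 0) / T (orthPoly T n * orthPoly T n)) := by
  induction n with
  | zero => simp [(orthPoly_sq_pos hT 0).ne']
  | succ n ih =>
    have h0 := orthPoly_sq_pos hT 0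
    have h1 := orthPoly_sq_pos hT n
    have h2 := orthPoly_sq_pos hT (n + 1)
    rw [prod_range_succ, ih, ← Real.sqrt_mul (by positivity)]
    congr 1
    field_simp

lemma not_summable_christoffel (hT : ∀ p : Polynomial ℝ, p ≠ 0 → 0 < T (p * p))
    (hcar : ¬ Summable fun d : ℕ =>
      T (Polynomial.X ^ (2 * (d + 1))) ^ (-(1 : ℝ) / (2 * (d + 1)))) {z : ℂ} (hz : z.im = 1) :
    ¬ Summable fun k : ℕ => Complex.normSq (Polynomial.aeval z (orthPoly T k)) /
        T (orthPoly T k * orthPoly T k) := by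
  intro hu
  apply hcar
  have hα : Summable fun n : ℕ => √(T (orthPoly T n * orthPoly T n) /
      T (orthPoly T (n + 1) * orthPoly T (n + 1))) :=
    Summable.of_nonneg_of_le (fun _ => Real.sqrt_nonneg _) (fun n => sqrt_ratio_le hT hz n)
      ((hu.add ((summable_nat_add_iff 1).2 hu)).mul_left _)
  have hg := summable_geom_mean (fun _ => Real.sqrt_nonneg _) hα
  simp only [prod_sqrt_ratio hT] at hg
  have h0 := orthPoly_sq_pos hT 0
  refine Summable.of_nonneg_of_le (fun d => ?_) (fun d => ?_)
    (hg.mul_left (max 1 (1 / T (orthPoly T 0 * orthPoly T 0))))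
  · exact Real.rpow_nonneg ((orthPoly_sq_pos hT _).le.trans (orthPoly_sq_le hT (d + 1))) _
  · have h1 := orthPoly_sq_pos hT (d + 1)
    have hd : (0 : ℝ) < (d : ℝ) + 1 := by positivity
    set h := T (orthPoly T (d + 1) * orthPoly T (d + 1))
    set k := T (orthPoly T 0 * orthPoly T 0)
    calc _ ≤ h ^ (-(1 : ℝ) / (2 * (d + 1))) := by
          apply Real.rpow_le_rpow_of_nonpos h1 (orthPoly_sq_le hT (d + 1))
          apply div_nonpos_of_nonpos_of_nonneg <;> linarith
      _ = (1 / k) ^ (1 / (2 * ((d : ℝ) + 1))) * (√(k / h)) ^ (1 / ((d : ℝ) + 1)) := by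
          rw [Real.sqrt_eq_rpow, ← Real.rpow_mul (by positivity)]
          have : (1 : ℝ) / 2 * (1 / (d + 1)) = 1 / (2 * (d + 1)) := by field_simp
          rw [this, ← Real.mul_rpow (by positivity) (by positivity), neg_div,
            Real.rpow_neg h1.le, ← Real.inv_rpow h1.le]
          congr 1
          field_simp
      _ ≤ _ := by
          gcongr
          apply rpow_le_max_one (by positivity) (by positivity)
          rw [div_le_one (by positivity)]
          linarith

/-- Under Carleman's condition the Christoffel function vanishes off the real line: some complex
polynomial `A + iB` takes the value `1` at `z` and has arbitrarily small norm. -/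
lemma exists_small_norm_of_pos (hT : ∀ p : Polynomial ℝ, p ≠ 0 → 0 < T (p * p))
    (hcar : ¬ Summable fun d : ℕ =>
      T (Polynomial.X ^ (2 * (d + 1))) ^ (-(1 : ℝ) / (2 * (d + 1)))) {z : ℂ} (hz : z.im = 1)
    {ε : ℝ} (hε : 0 < ε) :
    ∃ A B : Polynomial ℝ, Polynomial.aeval z A + Complex.I * Polynomial.aeval z B = 1 ∧
      T (A * A) + T (B * B) < ε := by
  have hns := not_summable_christoffel hT hcar hz
  set w : ℕ → ℂ := fun k => Polynomial.aeval z (orthPoly T k) with hw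
  set h : ℕ → ℝ := fun k => T (orthPoly T k * orthPoly T k) with hh
  have hpos : ∀ k, 0 < h k := orthPoly_sq_pos hT
  obtain ⟨N, hN⟩ : ∃ N, 1 / ε < ∑ k ∈ range N, Complex.normSq (w k) / h k := by
    by_contra hcon
    push Not at hcon
    exact hns (summable_of_sum_range_le
      (fun k => div_nonneg (Complex.normSq_nonneg _) (hpos k).le) hcon)
  set K := ∑ k ∈ range N, Complex.normSq (w k) / h k with hK
  have hKpos : 0 < K := lt_trans (by positivity) hN
  have hsq : ∀ c : ℕ → ℝ, T ((∑ k ∈ range N, Polynomial.C (c k) * orthPoly T k) *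
      (∑ k ∈ range N, Polynomial.C (c k) * orthPoly T k)) = ∑ k ∈ range N, c k ^ 2 * h k := by
    intro c
    rw [sum_mul_sum, map_sum]
    refine sum_congr rfl fun k hk => ?_
    rw [map_sum, sum_eq_single k]
    · rw [mul_mul_mul_comm, ← Polynomial.C_mul, map_C_mul, sq]
    · intro j _ hj
      rw [mul_mul_mul_comm, ← Polynomial.C_mul, map_C_mul]
      rcases lt_or_gt_of_ne hj with hlt | hlt
      · rw [orthPoly_orthogonal hT k j hlt, mul_zero]
      · rw [mul_comm (orthPoly T k), orthPoly_orthogonal hT j k hlt, mul_zero]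
    · exact fun h => absurd hk h
  refine ⟨∑ k ∈ range N, Polynomial.C ((w k).re / (h k * K)) * orthPoly T k,
    ∑ k ∈ range N, Polynomial.C (-(w k).im / (h k * K)) * orthPoly T k, ?_, ?_⟩
  · rw [map_sum, map_sum, mul_sum, ← sum_add_distrib]
    have : ∀ k ∈ range N, Polynomial.aeval z (Polynomial.C ((w k).re / (h k * K)) * orthPoly T k) +
        Complex.I * Polynomial.aeval z (Polynomial.C (-(w k).im / (h k * K)) * orthPoly T k) =
        ((Complex.normSq (w k) / h k / K : ℝ) : ℂ) := by
      intro k _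
      rw [map_mul, map_mul, Polynomial.aeval_C, Polynomial.aeval_C]
      change _ * w k + Complex.I * (_ * w k) = _
      have h1 := (hpos k).ne'
      apply Complex.ext
      · simp only [Complex.coe_algebraMap, Complex.add_re, Complex.mul_re, Complex.mul_im,
          Complex.ofReal_re, Complex.ofReal_im, Complex.I_re, Complex.I_im, Complex.normSq_apply]
        field_simp
        ring
      · simp only [Complex.coe_algebraMap, Complex.add_im, Complex.mul_re, Complex.mul_im,
          Complex.ofReal_re, Complex.ofReal_im, Complex.I_re, Complex.I_im]
        field_simp
        ring
    rw [sum_congr rfl this, ← Complex.ofReal_sum, ← sum_div, div_self hKpos.ne',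
      Complex.ofReal_one]
  · rw [hsq, hsq, ← sum_add_distrib]
    have : ∀ k ∈ range N, ((w k).re / (h k * K)) ^ 2 * h k + (-(w k).im / (h k * K)) ^ 2 * h k =
        Complex.normSq (w k) / h k / K ^ 2 := by
      intro k _
      have h1 := (hpos k).ne'
      rw [Complex.normSq_apply]
      field_simp
    rw [sum_congr rfl this, ← sum_div, ← hK, sq, div_mul_cancel_left₀ hKpos.ne']
    rw [one_div] at hN
    exact inv_lt_of_inv_lt₀ hε hN

end Christoffel

/-- Under Carleman's condition some complex polynomial `A + iB` takes the value `1` at `z` and has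
arbitrarily small norm; no strict positivity of the functional is needed. -/
lemma exists_small_norm {T : Polynomial ℝ →ₗ[ℝ] ℝ} (hT : ∀ p : Polynomial ℝ, 0 ≤ T (p * p))
    (hcar : (∀ p : Polynomial ℝ, p ≠ 0 → 0 < T (p * p)) → ¬ Summable fun d : ℕ =>
      T (Polynomial.X ^ (2 * (d + 1))) ^ (-(1 : ℝ) / (2 * (d + 1)))) {z : ℂ} (hz : z.im = 1)
    {ε : ℝ} (hε : 0 < ε) :
    ∃ A B : Polynomial ℝ, Polynomial.aeval z A + Complex.I * Polynomial.aeval z B = 1 ∧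
      T (A * A) + T (B * B) < ε := by
  by_cases hpos : ∀ p : Polynomial ℝ, p ≠ 0 → 0 < T (p * p)
  · exact exists_small_norm_of_pos hpos (hcar hpos) hz hε
  push Not at hpos
  obtain ⟨p₀, hp₀, hTp₀⟩ := hpos
  have hroot : ∀ N : ℕ, ∀ p : Polynomial ℝ, p.natDegree ≤ N → p ≠ 0 → T (p * p) ≤ 0 →
      ∃ r : Polynomial ℝ, T (r * r) ≤ 0 ∧ Polynomial.aeval z r ≠ 0 := by
    intro N
    induction N with
    | zero =>
      intro p hN hp hTp
      refine ⟨p, hTp, ?_⟩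
      rw [Polynomial.eq_C_of_natDegree_le_zero hN, Polynomial.aeval_C]
      rw [Polynomial.eq_C_of_natDegree_le_zero hN] at hp
      simpa using hp
    | succ N ih =>
      intro p hN hp hTp
      by_cases hpz : Polynomial.aeval z p = 0
      · obtain ⟨r, hr⟩ := p.quadratic_dvd_of_aeval_eq_zero_im_ne_zero hpz (by simp [hz])
        have hr0 : r ≠ 0 := by rintro rfl; simp at hr; exact hp hr
        have hw : (Polynomial.X ^ 2 - Polynomial.C (2 * z.re) * Polynomial.X +
            Polynomial.C (‖z‖ ^ 2) : Polynomial ℝ) =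
            (Polynomial.X - Polynomial.C z.re) ^ 2 + 1 := by
          rw [← Complex.normSq_eq_norm_sq, Complex.normSq_apply, hz]
          simp only [map_add, map_mul, map_ofNat, Polynomial.C_1]
          ring
        rw [hw] at hr
        have hdeg : ((Polynomial.X - Polynomial.C z.re) ^ 2 + 1 : Polynomial ℝ).natDegree = 2 := by
          rw [← Polynomial.C_1, Polynomial.natDegree_add_C, Polynomial.natDegree_pow,
            Polynomial.natDegree_X_sub_C]
        have hq0 : ((Polynomial.X - Polynomial.C z.re) ^ 2 + 1 : Polynomial ℝ) ≠ 0 := by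
          rintro h0
          rw [h0] at hdeg
          simp at hdeg
        refine ih r ?_ hr0 ?_
        · rw [hr, Polynomial.natDegree_mul hq0 hr0, hdeg] at hN
          omega
        · have h1 := hT ((Polynomial.X - Polynomial.C z.re) ^ 2 * r)
          have h2 := hT ((Polynomial.X - Polynomial.C z.re) * r)
          have h3 : p * p = ((Polynomial.X - Polynomial.C z.re) ^ 2 * r) *
              ((Polynomial.X - Polynomial.C z.re) ^ 2 * r) +
              (2 : ℝ) • (((Polynomial.X - Polynomial.C z.re) * r) *
              ((Polynomial.X - Polynomial.C z.re) * r)) + r * r := by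
            rw [hr, Polynomial.smul_eq_C_mul, map_ofNat]
            ring
          rw [h3, map_add, map_add, map_smul, smul_eq_mul] at hTp
          linarith
      · exact ⟨p, hTp, hpz⟩
  obtain ⟨r, hr, hrz⟩ := hroot _ p₀ le_rfl hp₀ hTp₀
  have hr' : T (r * r) = 0 := le_antisymm hr (hT r)
  set c := (Polynomial.aeval z r)⁻¹ with hc
  refine ⟨Polynomial.C c.re * r, Polynomial.C c.im * r, ?_, ?_⟩
  · rw [map_mul, map_mul, Polynomial.aeval_C, Polynomial.aeval_C, Complex.coe_algebraMap]
    have : (c.re : ℂ) * Polynomial.aeval z r + Complex.I * (c.im * Polynomial.aeval z r) =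
        (c.re + c.im * Complex.I) * Polynomial.aeval z r := by ring
    rw [this, Complex.re_add_im, hc, inv_mul_cancel₀ hrz]
  · have : ∀ a : ℝ, T (Polynomial.C a * r * (Polynomial.C a * r)) = 0 := by
      intro a
      rw [mul_mul_mul_comm, ← Polynomial.C_mul, map_C_mul, hr', mul_zero]
    rw [this, this, add_zero]
    exact hε

/-- A real polynomial minus its value at `z` is divisible by `s - z`. -/
lemma exists_quotient (z : ℂ) (A : Polynomial ℝ) : ∃ A₁ A₂ : Polynomial ℝ, ∀ s : ℝ,
    ((A.eval s : ℝ) : ℂ) - Polynomial.aeval z A =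
      (s - z) * ((A₁.eval s : ℝ) + Complex.I * (A₂.eval s : ℝ)) := by
  induction A using Polynomial.induction_on' with
  | add p q hp hq =>
    obtain ⟨p₁, p₂, hp⟩ := hp
    obtain ⟨q₁, q₂, hq⟩ := hq
    refine ⟨p₁ + q₁, p₂ + q₂, fun s => ?_⟩
    simp only [Polynomial.eval_add, map_add, Complex.ofReal_add]
    linear_combination hp s + hq s
  | monomial k a =>
    induction k with
    | zero => exact ⟨0, 0, fun s => by simp⟩
    | succ k ih =>
      obtain ⟨A₁, A₂, h⟩ := ih
      refine ⟨Polynomial.X * A₁ + Polynomial.C (a * (z ^ k).re),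
        Polynomial.X * A₂ + Polynomial.C (a * (z ^ k).im), fun s => ?_⟩
      have hs := h s
      simp only [Polynomial.eval_monomial, Polynomial.aeval_monomial, Complex.coe_algebraMap,
        Complex.ofReal_mul, Complex.ofReal_pow, Polynomial.eval_add, Polynomial.eval_mul,
        Polynomial.eval_X, Polynomial.eval_C, Complex.ofReal_add, pow_succ] at hs ⊢
      have hz := Complex.re_add_im (z ^ k)
      linear_combination s * hs - (s - z) * a * hz

lemma exists_resolvent_approx {z : ℂ} (hz : z.im = 1) {A B : Polynomial ℝ}
    (h : Polynomial.aeval z A + Complex.I * Polynomial.aeval z B = 1) :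
    ∃ R₁ R₂ : Polynomial ℝ, ∀ s : ℝ, ((s - z.re) ^ 2 + 1) * (R₁.eval s ^ 2 + R₂.eval s ^ 2) =
      (1 - A.eval s) ^ 2 + B.eval s ^ 2 := by
  obtain ⟨A₁, A₂, hA⟩ := exists_quotient z A
  obtain ⟨B₁, B₂, hB⟩ := exists_quotient z B
  refine ⟨A₁ - B₂, A₂ + B₁, fun s => ?_⟩
  have key : (1 - (A.eval s : ℝ) : ℂ) - Complex.I * (B.eval s : ℝ) =
      -(s - z) * (((A₁ - B₂).eval s : ℝ) + Complex.I * ((A₂ + B₁).eval s : ℝ)) := by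
    simp only [Polynomial.eval_sub, Polynomial.eval_add, Complex.ofReal_sub, Complex.ofReal_add]
    linear_combination -hA s - Complex.I * hB s - h +
      (-(s - z) * (B₂.eval s : ℝ)) * Complex.I_sq
  have := congrArg Complex.normSq key
  rw [Complex.normSq_mul, Complex.normSq_apply, Complex.normSq_apply, Complex.normSq_apply] at this
  simp only [Complex.sub_re, Complex.sub_im, Complex.mul_re, Complex.mul_im, Complex.add_re,
    Complex.add_im, Complex.neg_re, Complex.neg_im, Complex.I_re, Complex.I_im, Complex.one_re,
    Complex.one_im, Complex.ofReal_re, Complex.ofReal_im, hz] at this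
  linear_combination -this

/-! ### Polynomials against a measure with finite moments -/

section Moments

variable {m : ℕ} {ν : Measure (Fin m → ℝ)}

lemma measurable_eval (h : MvPolynomial (Fin m) ℝ) : Measurable fun y => MvPolynomial.eval y h :=
  h.continuous_eval.measurable

lemma momentsFinite.integrable (hmom : momentsFinite ν) (h : MvPolynomial (Fin m) ℝ) :
    Integrable (fun y => MvPolynomial.eval y h) ν :=
  (integrable_norm_iff (measurable_eval h).aestronglyMeasurable).1 (hmom h)

lemma momentsFinite.isFiniteMeasure (hmom : momentsFinite ν) : IsFiniteMeasure ν := by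
  have := hmom 1
  simp only [map_one, abs_one] at this
  exact (integrable_const_iff_isFiniteMeasure one_ne_zero).1 this

/-- Integration of polynomials against `ν` as a linear functional. -/
noncomputable def polyInt (hmom : momentsFinite ν) : MvPolynomial (Fin m) ℝ →ₗ[ℝ] ℝ where
  toFun h := ∫ y, MvPolynomial.eval y h ∂ν
  map_add' h g := by
    simp only [map_add]
    exact integral_add (hmom.integrable h) (hmom.integrable g)
  map_smul' c h := by
    simp only [MvPolynomial.smul_eval, RingHom.id_apply, smul_eq_mul]
    exact integral_const_mul _ _

lemma polyInt_sq_nonneg (hmom : momentsFinite ν) (h : MvPolynomial (Fin m) ℝ) :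
    0 ≤ polyInt hmom (h * h) :=
  integral_nonneg fun y => by simp [mul_self_nonneg]

end Moments

/-- Consecutive even moments of a positive functional satisfy Lyapunov's inequality. -/
lemma pow_le_mul_pow_of_log_convex {t : ℕ → ℝ} (h0 : ∀ k, 0 ≤ t k)
    (h : ∀ k, t (k + 1) ^ 2 ≤ t k * t (k + 2)) (k : ℕ) :
    t k ^ (k + 1) ≤ t 0 * t (k + 1) ^ k := by
  induction k with
  | zero => simp
  | succ k ih =>
    rcases (h0 (k + 1)).eq_or_lt with hz | hpos
    · rw [← hz, zero_pow (by omega)]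
      exact mul_nonneg (h0 _) (pow_nonneg (h0 _) _)
    · have h1 : t (k + 1) ^ k * t (k + 1) ^ (k + 2) ≤
          t (k + 1) ^ k * (t 0 * t (k + 2) ^ (k + 1)) := by
        calc t (k + 1) ^ k * t (k + 1) ^ (k + 2) = (t (k + 1) ^ 2) ^ (k + 1) := by ring
          _ ≤ (t k * t (k + 2)) ^ (k + 1) := by gcongr; exact h k
          _ = t k ^ (k + 1) * t (k + 2) ^ (k + 1) := by ring
          _ ≤ (t 0 * t (k + 1) ^ k) * t (k + 2) ^ (k + 1) := by
              gcongr
              exact pow_nonneg (h0 _) _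
          _ = _ := by ring
      exact le_of_mul_le_mul_left h1 (pow_pos hpos k)

lemma rpow_neg_le_of_log_convex {t : ℕ → ℝ} (h0 : ∀ k, 0 ≤ t k)
    (h : ∀ k, t (k + 1) ^ 2 ≤ t k * t (k + 2)) (k : ℕ) (hk : 0 < k) (hpos : 0 < t k) :
    t (k + 1) ^ (-(1 : ℝ) / (2 * (k + 1))) ≤
      max 1 (t 0) * t k ^ (-(1 : ℝ) / (2 * k)) := by
  have hl := pow_le_mul_pow_of_log_convex h0 h k
  have hpos' : 0 < t (k + 1) := by
    rcases (h0 (k + 1)).eq_or_lt with hz | hp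
    · rw [← hz, zero_pow (by omega), mul_zero] at hl
      exact absurd hl (not_le.2 (pow_pos hpos _))
    · exact hp
  have hkr : (0 : ℝ) < k := by exact_mod_cast hk
  have hroot : t k ^ (1 / (2 * (k : ℝ))) ≤
      t 0 ^ (1 / (2 * (k : ℝ) * (k + 1))) * t (k + 1) ^ (1 / (2 * ((k : ℝ) + 1))) := by
    have := Real.rpow_le_rpow (pow_nonneg hpos.le _) hl
      (show 0 ≤ 1 / (2 * (k : ℝ) * (k + 1)) by positivity)
    rw [Real.mul_rpow (h0 0) (pow_nonneg hpos'.le _), ← Real.rpow_natCast, ← Real.rpow_natCast,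
      ← Real.rpow_mul hpos.le, ← Real.rpow_mul hpos'.le] at this
    convert this using 3
    · push_cast; field_simp
    · field_simp
  have hmax : t 0 ^ (1 / (2 * (k : ℝ) * (k + 1))) ≤ max 1 (t 0) := by
    apply rpow_le_max_one (h0 0) (by positivity)
    rw [div_le_one (by positivity)]
    have : (1 : ℝ) ≤ k := by exact_mod_cast hk
    nlinarith
  rw [neg_div, neg_div, Real.rpow_neg hpos.le, Real.rpow_neg hpos'.le,
    ← div_eq_mul_inv, le_div_iff₀ (by positivity), inv_mul_le_iff₀ (by positivity)]
  calc _ ≤ _ := hroot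
    _ ≤ max 1 (t 0) * t (k + 1) ^ (1 / (2 * ((k : ℝ) + 1))) := by gcongr
    _ = _ := mul_comm _ _

section Localization

variable {m : ℕ} {ν : Measure (Fin m → ℝ)}

/-- The functional `p ↦ ∫ p(y_j) W(y) dν` on univariate polynomials. -/
noncomputable def coordInt (hmom : momentsFinite ν) (W : MvPolynomial (Fin m) ℝ) (j : Fin m) :
    Polynomial ℝ →ₗ[ℝ] ℝ :=
  polyInt hmom ∘ₗ LinearMap.mulRight ℝ W ∘ₗ
    (Polynomial.aeval (MvPolynomial.X j : MvPolynomial (Fin m) ℝ)).toLinearMap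

lemma eval_aeval_X (y : Fin m → ℝ) (j : Fin m) (p : Polynomial ℝ) :
    MvPolynomial.eval y (Polynomial.aeval (MvPolynomial.X j : MvPolynomial (Fin m) ℝ) p) =
      p.eval (y j) := by
  induction p using Polynomial.induction_on' with
  | add p q hp hq => simp [hp, hq]
  | monomial k a => simp [Polynomial.aeval_monomial, MvPolynomial.algebraMap_eq]

lemma coordInt_apply (hmom : momentsFinite ν) (W : MvPolynomial (Fin m) ℝ) (j : Fin m)
    (p : Polynomial ℝ) :
    coordInt hmom W j p = ∫ y, p.eval (y j) * MvPolynomial.eval y W ∂ν := by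
  simp only [coordInt, LinearMap.comp_apply, polyInt, LinearMap.mulRight_apply,
    AlgHom.toLinearMap_apply, LinearMap.coe_mk, AddHom.coe_mk, map_mul, eval_aeval_X]

lemma coordInt_sq_nonneg (hmom : momentsFinite ν) {W : MvPolynomial (Fin m) ℝ}
    (hW : ∀ y, 0 ≤ MvPolynomial.eval y W) (j : Fin m) (p : Polynomial ℝ) :
    0 ≤ coordInt hmom W j (p * p) := by
  rw [coordInt_apply]
  refine integral_nonneg fun y => mul_nonneg ?_ (hW y)
  rw [Polynomial.eval_mul]
  exact mul_self_nonneg _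

lemma coordInt_X_pow_le (hmom : momentsFinite ν) (W : MvPolynomial (Fin m) ℝ) (j : Fin m)
    (d : ℕ) : coordInt hmom W j (Polynomial.X ^ (2 * d)) ≤
      √(∫ y, (y j) ^ (2 * (2 * d)) ∂ν) * √(polyInt hmom (W * W)) := by
  have h := sq_le_mul_of_nonneg_sq (polyInt_sq_nonneg hmom)
    ((MvPolynomial.X j : MvPolynomial (Fin m) ℝ) ^ (2 * d)) W
  have h1 : polyInt hmom ((MvPolynomial.X j : MvPolynomial (Fin m) ℝ) ^ (2 * d) *
      (MvPolynomial.X j : MvPolynomial (Fin m) ℝ) ^ (2 * d)) =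
      ∫ y, (y j) ^ (2 * (2 * d)) ∂ν := by
    simp only [polyInt, LinearMap.coe_mk, AddHom.coe_mk]
    congr 1
    ext y
    simp
    ring
  have h2 : coordInt hmom W j (Polynomial.X ^ (2 * d)) =
      polyInt hmom ((MvPolynomial.X j : MvPolynomial (Fin m) ℝ) ^ (2 * d) * W) := by
    simp [coordInt]
  rw [h1] at h
  rw [h2, ← Real.sqrt_mul' _ (polyInt_sq_nonneg hmom W)]
  exact Real.le_sqrt_of_sq_le h

/-- Carleman's condition passes to the coordinate marginals of `W ν` for a polynomial `W`. -/
lemma Carleman.not_summable_coordInt (hcar : Carleman ν) (hmom : momentsFinite ν)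
    (W : MvPolynomial (Fin m) ℝ) (j : Fin m)
    (hpos : ∀ p : Polynomial ℝ, p ≠ 0 → 0 < coordInt hmom W j (p * p)) :
    ¬ Summable fun d : ℕ =>
      coordInt hmom W j (Polynomial.X ^ (2 * (d + 1))) ^ (-(1 : ℝ) / (2 * (d + 1))) := by
  intro hs
  apply hcar j
  set t : ℕ → ℝ := fun k => ∫ y, (y j) ^ (2 * k) ∂ν with ht
  have ht0 : ∀ k, 0 ≤ t k := fun k => integral_nonneg fun y => by
    change 0 ≤ (y j) ^ (2 * k)
    rw [pow_mul]; positivity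
  have htl : ∀ k, t (k + 1) ^ 2 ≤ t k * t (k + 2) := by
    intro k
    have := sq_le_mul_of_nonneg_sq (polyInt_sq_nonneg hmom)
      ((MvPolynomial.X j : MvPolynomial (Fin m) ℝ) ^ k) (MvPolynomial.X j ^ (k + 2))
    simp only [polyInt, LinearMap.coe_mk, AddHom.coe_mk, ← pow_add, map_pow,
      MvPolynomial.eval_X] at this
    have h1 : k + (k + 2) = 2 * (k + 1) := by ring
    have h2 : k + 2 + (k + 2) = 2 * (k + 2) := by ring
    rwa [h1, h2, ← two_mul] at this
  set κ := √(polyInt hmom (W * W)) with hκ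
  have hTpos : ∀ d : ℕ, 0 < coordInt hmom W j (Polynomial.X ^ (2 * (d + 1))) := by
    intro d
    have := hpos (Polynomial.X ^ (d + 1)) (pow_ne_zero _ Polynomial.X_ne_zero)
    rwa [← pow_add, ← two_mul] at this
  have hTle : ∀ d : ℕ, coordInt hmom W j (Polynomial.X ^ (2 * (d + 1))) ≤
      √(t (2 * (d + 1))) * κ := fun d => coordInt_X_pow_le hmom W j (d + 1)
  have hκpos : 0 < κ := by
    rcases (Real.sqrt_nonneg (polyInt hmom (W * W))).eq_or_lt with h | h
    · have h1 := hTpos 0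
      have h2 := hTle 0
      rw [hκ, ← h, mul_zero] at h2
      exact absurd h1 (not_lt.2 h2)
    · exact h
  have htpos : ∀ d : ℕ, 0 < t (2 * (d + 1)) := by
    intro d
    have h1 := (hTpos d).trans_le (hTle d)
    exact Real.sqrt_pos.1 (pos_of_mul_pos_left h1 hκpos.le)
  have hodd : Summable fun e : ℕ => t (2 * (e + 1)) ^ (-(1 : ℝ) / (2 * (2 * (e + 1)))) := by
    refine Summable.of_nonneg_of_le (fun e => Real.rpow_nonneg (ht0 _) _) (fun e => ?_)
      (hs.mul_left (max 1 κ))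
    have he : (0 : ℝ) < (e : ℝ) + 1 := by positivity
    have h1 := Real.rpow_le_rpow_of_nonpos (hTpos e) (hTle e)
      (show -(1 : ℝ) / (2 * (e + 1)) ≤ 0 by apply div_nonpos_of_nonpos_of_nonneg <;> linarith)
    rw [Real.mul_rpow (Real.sqrt_nonneg _) hκpos.le, Real.sqrt_eq_rpow,
      ← Real.rpow_mul (ht0 _), neg_div, Real.rpow_neg hκpos.le, ← div_eq_mul_inv,
      div_le_iff₀ (by positivity)] at h1
    have h2 : κ ^ (1 / (2 * ((e : ℝ) + 1))) ≤ max 1 κ := by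
      apply rpow_le_max_one hκpos.le (by positivity)
      rw [div_le_one (by positivity)]
      linarith
    calc _ = t (2 * (e + 1)) ^ (1 / 2 * -(1 / (2 * ((e : ℝ) + 1)))) := by
          congr 1; field_simp
      _ ≤ _ := h1
      _ ≤ _ := by
          rw [mul_comm, neg_div]
          gcongr
          exact Real.rpow_nonneg (hTpos e).le _
  have heven : Summable fun e : ℕ => t (2 * (e + 1) + 1) ^
      (-(1 : ℝ) / (2 * (2 * ((e : ℝ) + 1) + 1))) := by
    refine Summable.of_nonneg_of_le (fun e => Real.rpow_nonneg (ht0 _) _) (fun e => ?_)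
      (hodd.mul_left (max 1 (t 0)))
    have := rpow_neg_le_of_log_convex ht0 htl (2 * (e + 1)) (by omega) (htpos e)
    push_cast at this
    exact this
  refine Summable.even_add_odd ?_ ?_
  · rw [← summable_nat_add_iff 1]
    refine heven.congr fun e => ?_
    push_cast
    rfl
  · refine hodd.congr fun e => ?_
    push_cast
    congr 1
    ring

lemma integrable_mul_bounded (hmom : momentsFinite ν) (h : MvPolynomial (Fin m) ℝ)
    {w : (Fin m → ℝ) → ℝ} (hw : Measurable w) (h0 : ∀ y, 0 ≤ w y) (h1 : ∀ y, w y ≤ 1) :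
    Integrable (fun y => MvPolynomial.eval y h * w y) ν :=
  (hmom.integrable h).mul_bdd (c := 1) hw.aestronglyMeasurable
    (Filter.Eventually.of_forall fun y => by rw [Real.norm_of_nonneg (h0 y)]; exact h1 y)

lemma resolvent_error_bound {Q F w ρ α β r₁ r₂ δ : ℝ} (hδ : 0 < δ) (hwρ0 : 0 ≤ w * ρ)
    (hwρ1 : w * ρ ≤ 1) (hr : r₁ ^ 2 + r₂ ^ 2 = ρ * ((1 - α) ^ 2 + β ^ 2)) :
    (Q * r₁) ^ 2 * F * w + (Q * r₂) ^ 2 * F * w ≤ Q ^ 2 * F * (w * ρ) +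
      (δ * (Q ^ 2 * (1 + F ^ 2)) + (1 + δ⁻¹) * ((α * α + β * β) * (Q ^ 2 * (1 + F ^ 2)))) := by
  have e1 : (Q * r₁) ^ 2 * F * w + (Q * r₂) ^ 2 * F * w =
      Q ^ 2 * F * (w * ρ) + Q ^ 2 * (w * ρ) * (F * (-2 * α + α ^ 2 + β ^ 2)) := by
    linear_combination Q ^ 2 * F * w * hr
  have hF : |F| ≤ 1 + F ^ 2 := by
    rw [abs_le]
    constructor <;> nlinarith [sq_nonneg (F - 1), sq_nonneg (F + 1)]
  have hα : |-2 * α + α ^ 2 + β ^ 2| ≤ δ + (1 + δ⁻¹) * (α * α + β * β) := by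
    have hd1 : δ * δ⁻¹ = 1 := mul_inv_cancel₀ hδ.ne'
    have k1 : 0 ≤ δ⁻¹ * (δ - α) ^ 2 := by positivity
    have k2 : 0 ≤ δ⁻¹ * (δ + α) ^ 2 := by positivity
    have k3 : 0 ≤ δ⁻¹ * β ^ 2 := by positivity
    have e2 : δ⁻¹ * (δ - α) ^ 2 = δ - 2 * α + δ⁻¹ * α ^ 2 := by
      linear_combination (δ - 2 * α) * hd1
    have e3 : δ⁻¹ * (δ + α) ^ 2 = δ + 2 * α + δ⁻¹ * α ^ 2 := by
      linear_combination (δ + 2 * α) * hd1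
    rw [abs_le]
    constructor <;> nlinarith [sq_nonneg α, sq_nonneg β]
  rw [e1]
  refine add_le_add_right ?_ _
  calc Q ^ 2 * (w * ρ) * (F * (-2 * α + α ^ 2 + β ^ 2))
      ≤ Q ^ 2 * (w * ρ) * |F * (-2 * α + α ^ 2 + β ^ 2)| := by
        gcongr
        exact le_abs_self _
    _ ≤ Q ^ 2 * 1 * ((1 + F ^ 2) * (δ + (1 + δ⁻¹) * (α * α + β * β))) := by
        rw [abs_mul]
        gcongr
    _ = _ := by ring

/-- Nonnegativity of `q ↦ ∫ q² f w dν` is preserved when the weight `w` is multiplied by a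
resolvent factor `1 / ((y_j - a)² + 1)`. -/
lemma integral_sq_mul_resolvent_nonneg (hcar : Carleman ν) (hmom : momentsFinite ν)
    (f : MvPolynomial (Fin m) ℝ) {w : (Fin m → ℝ) → ℝ} (hw : Measurable w)
    (h0 : ∀ y, 0 ≤ w y) (h1 : ∀ y, w y ≤ 1)
    (hpos : ∀ q : MvPolynomial (Fin m) ℝ, 0 ≤ ∫ y, MvPolynomial.eval y (q ^ 2 * f) * w y ∂ν)
    (j : Fin m) (a : ℝ) (q : MvPolynomial (Fin m) ℝ) :
    0 ≤ ∫ y, MvPolynomial.eval y (q ^ 2 * f) * (w y * ((y j - a) ^ 2 + 1)⁻¹) ∂ν := by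
  set W := q ^ 2 * (1 + f ^ 2) with hWdef
  have hW : ∀ y, 0 ≤ MvPolynomial.eval y W := fun y => by
    simp only [hWdef, map_mul, map_pow, map_add, map_one]; positivity
  set I := ∫ y, MvPolynomial.eval y (q ^ 2 * f) * (w y * ((y j - a) ^ 2 + 1)⁻¹) ∂ν with hI
  set M := ∫ y, MvPolynomial.eval y W ∂ν with hM
  have hM0 : 0 ≤ M := integral_nonneg hW
  have hρm : Measurable fun y : Fin m → ℝ => ((y j - a) ^ 2 + 1)⁻¹ := by fun_prop
  have hρ0 : ∀ y : Fin m → ℝ, 0 ≤ ((y j - a) ^ 2 + 1)⁻¹ := fun y => by positivity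
  have hρ1 : ∀ y : Fin m → ℝ, ((y j - a) ^ 2 + 1)⁻¹ ≤ 1 := fun y => by
    apply inv_le_one_of_one_le₀; nlinarith [sq_nonneg (y j - a)]
  have key : ∀ δ : ℝ, 0 < δ → ∀ ε : ℝ, 0 < ε → -I ≤ δ * M + (1 + δ⁻¹) * ε := by
    intro δ hδ ε hε
    obtain ⟨A, B, hAB, hsmall⟩ := exists_small_norm (coordInt_sq_nonneg hmom hW j)
      (fun hp => hcar.not_summable_coordInt hmom W j hp) (z := ⟨a, 1⟩) rfl hε
    obtain ⟨R₁, R₂, hR⟩ := exists_resolvent_approx (z := ⟨a, 1⟩) rfl hAB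
    rw [← map_add, coordInt_apply] at hsmall
    set P : Polynomial ℝ → MvPolynomial (Fin m) ℝ :=
      fun p => Polynomial.aeval (MvPolynomial.X j : MvPolynomial (Fin m) ℝ) p with hP
    have hPe : ∀ p y, MvPolynomial.eval y (P p) = p.eval (y j) := fun p y => eval_aeval_X y j p
    have hq := add_nonneg (hpos (q * P R₁)) (hpos (q * P R₂))
    rw [← integral_add (integrable_mul_bounded hmom _ hw h0 h1)
      (integrable_mul_bounded hmom _ hw h0 h1)] at hq
    have hintI : Integrable (fun y => MvPolynomial.eval y (q ^ 2 * f) *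
        (w y * ((y j - a) ^ 2 + 1)⁻¹)) ν :=
      integrable_mul_bounded hmom _ (hw.mul hρm) (fun y => mul_nonneg (h0 y) (hρ0 y))
        (fun y => mul_le_one₀ (h1 y) (hρ0 y) (hρ1 y))
    have hintW := hmom.integrable W
    have hintAB : Integrable (fun y => (A * A + B * B).eval (y j) * MvPolynomial.eval y W) ν := by
      refine (hmom.integrable (P (A * A + B * B) * W)).congr
        (Filter.Eventually.of_forall fun y => ?_)
      simp only [map_mul, hPe]
    have hle : ∀ y, MvPolynomial.eval y ((q * P R₁) ^ 2 * f) * w y +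
        MvPolynomial.eval y ((q * P R₂) ^ 2 * f) * w y ≤
        MvPolynomial.eval y (q ^ 2 * f) * (w y * ((y j - a) ^ 2 + 1)⁻¹) +
        (δ * MvPolynomial.eval y W +
          (1 + δ⁻¹) * ((A * A + B * B).eval (y j) * MvPolynomial.eval y W)) := by
      intro y
      have hRy := hR (y j)
      simp only [map_mul, map_pow, hPe, hWdef, map_add, map_one, Polynomial.eval_add,
        Polynomial.eval_mul]
      exact resolvent_error_bound hδ (mul_nonneg (h0 y) (hρ0 y))
        (mul_le_one₀ (h1 y) (hρ0 y) (hρ1 y)) ((eq_inv_mul_iff_mul_eq₀ (by positivity)).2 hRy)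
    have hsum : Integrable (fun y => δ * MvPolynomial.eval y W +
        (1 + δ⁻¹) * ((A * A + B * B).eval (y j) * MvPolynomial.eval y W)) ν :=
      (hintW.const_mul δ).add (hintAB.const_mul (1 + δ⁻¹))
    have hint := hq.trans (integral_mono
      ((integrable_mul_bounded hmom _ hw h0 h1).add (integrable_mul_bounded hmom _ hw h0 h1))
      (hintI.add hsum) hle)
    rw [integral_add' hintI hsum, integral_add (hintW.const_mul δ) (hintAB.const_mul (1 + δ⁻¹)),
      integral_const_mul, integral_const_mul] at hint
    have : (1 + δ⁻¹) * ∫ y, (A * A + B * B).eval (y j) * MvPolynomial.eval y W ∂ν ≤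
        (1 + δ⁻¹) * ε := by
      gcongr
    linarith
  by_contra hneg
  push Not at hneg
  set δ := -I / (4 * (M + 1)) with hδdef
  have hδ : 0 < δ := div_pos (by linarith) (by linarith)
  have hδM : δ * M ≤ -I / 4 := by
    have : δ * (M + 1) = -I / 4 := by rw [hδdef]; field_simp
    nlinarith
  have hb : 0 < 1 + δ⁻¹ := by positivity
  have := key δ hδ (-I / (4 * (1 + δ⁻¹))) (div_pos (by linarith) (by linarith))
  have e : (1 + δ⁻¹) * (-I / (4 * (1 + δ⁻¹))) = -I / 4 := by field_simp
  rw [e] at this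
  linarith

end Localization

section Peaking

variable {m : ℕ} {ν : Measure (Fin m → ℝ)}

lemma prod_resolvent_nonneg (s : Finset (Fin m)) (a y : Fin m → ℝ) :
    0 ≤ ∏ j ∈ s, ((y j - a j) ^ 2 + 1)⁻¹ :=
  Finset.prod_nonneg fun j _ => by positivity

lemma prod_resolvent_le_one (s : Finset (Fin m)) (a y : Fin m → ℝ) :
    ∏ j ∈ s, ((y j - a j) ^ 2 + 1)⁻¹ ≤ 1 :=
  Finset.prod_le_one (fun j _ => by positivity) fun j _ => by
    apply inv_le_one_of_one_le₀; nlinarith [sq_nonneg (y j - a j)]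

lemma measurable_prod_resolvent (s : Finset (Fin m)) (a : Fin m → ℝ) :
    Measurable fun y : Fin m → ℝ => ∏ j ∈ s, ((y j - a j) ^ 2 + 1)⁻¹ := by
  fun_prop

lemma integral_sq_mul_prod_resolvent_nonneg (hcar : Carleman ν) (hmom : momentsFinite ν)
    (f : MvPolynomial (Fin m) ℝ) {w : (Fin m → ℝ) → ℝ} (hw : Measurable w)
    (h0 : ∀ y, 0 ≤ w y) (h1 : ∀ y, w y ≤ 1)
    (hpos : ∀ q : MvPolynomial (Fin m) ℝ, 0 ≤ ∫ y, MvPolynomial.eval y (q ^ 2 * f) * w y ∂ν)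
    (a : Fin m → ℝ) (s : Finset (Fin m)) (q : MvPolynomial (Fin m) ℝ) :
    0 ≤ ∫ y, MvPolynomial.eval y (q ^ 2 * f) * (w y * ∏ j ∈ s, ((y j - a j) ^ 2 + 1)⁻¹) ∂ν := by
  induction s using Finset.induction_on generalizing q with
  | empty => simpa using hpos q
  | insert j s hj ih =>
    have := integral_sq_mul_resolvent_nonneg hcar hmom f
      (hw.mul (measurable_prod_resolvent s a))
      (fun y => mul_nonneg (h0 y) (prod_resolvent_nonneg s a y))
      (fun y => mul_le_one₀ (h1 y) (prod_resolvent_nonneg s a y) (prod_resolvent_le_one s a y))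
      ih j (a j) q
    simp only [Finset.prod_insert hj]
    convert this using 4
    rw [Pi.mul_apply]
    ring

lemma integral_mul_pow_resolvent_nonneg (hcar : Carleman ν) (hmom : momentsFinite ν)
    (f : MvPolynomial (Fin m) ℝ)
    (hpos : ∀ q : MvPolynomial (Fin m) ℝ, 0 ≤ ∫ y, MvPolynomial.eval y (q ^ 2 * f) ∂ν)
    (a : Fin m → ℝ) (N : ℕ) (q : MvPolynomial (Fin m) ℝ) :
    0 ≤ ∫ y, MvPolynomial.eval y (q ^ 2 * f) * (∏ j, ((y j - a j) ^ 2 + 1)⁻¹) ^ N ∂ν := by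
  induction N generalizing q with
  | zero => simpa using hpos q
  | succ N ih =>
    simp only [pow_succ]
    exact integral_sq_mul_prod_resolvent_nonneg hcar hmom f
      ((measurable_prod_resolvent _ a).pow_const N)
      (fun y => pow_nonneg (prod_resolvent_nonneg _ a y) N)
      (fun y => pow_le_one₀ (prod_resolvent_nonneg _ a y) (prod_resolvent_le_one _ a y)) ih a _ q

/-- If `∫ F ρ^N dν ≥ 0` for a function `ρ` peaking at a point `a` of the support of `ν`, then
`F a ≥ 0`. -/
lemma nonneg_of_integral_mul_pow_nonneg {X : Type*} [PseudoMetricSpace X] [MeasurableSpace X]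
    [OpensMeasurableSpace X] {ν : Measure X} [IsFiniteMeasure ν] {F ρ : X → ℝ} {a : X}
    (hFc : Continuous F) (hFi : Integrable F ν) (hρc : Continuous ρ)
    (hρ0 : ∀ᵐ y ∂ν, 0 ≤ ρ y) (hρ1 : ∀ᵐ y ∂ν, ρ y ≤ 1) (hρa : ρ a = 1)
    (hout : ∀ r > 0, ∃ θ, 0 < θ ∧ θ < 1 ∧ ∀ᵐ y ∂ν, y ∉ Metric.ball a r → ρ y ≤ θ)
    (hint : ∀ N : ℕ, 0 ≤ ∫ y, F y * ρ y ^ N ∂ν)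
    (hpos : ∀ U : Set X, IsOpen U → a ∈ U → 0 < ν U) : 0 ≤ F a := by
  by_contra! hneg
  set δ := -F a / 2 with hδ
  have hδ0 : 0 < δ := by rw [hδ]; linarith
  have hnhds : {y | F y < -δ} ∈ nhds a :=
    (isOpen_lt hFc continuous_const).mem_nhds (by rw [Set.mem_ofPred_eq, hδ]; linarith)
  obtain ⟨r, hr, hball⟩ := Metric.mem_nhds_iff.1 hnhds
  obtain ⟨θ, hθ0, hθ1, hθ⟩ := hout r hr
  obtain ⟨θ', hθθ', hθ'1⟩ := exists_between hθ1
  set U : Set X := Metric.ball a r ∩ {y | θ' < ρ y} with hU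
  have hUo : IsOpen U := Metric.isOpen_ball.inter (isOpen_lt continuous_const hρc)
  have haU : a ∈ U := ⟨Metric.mem_ball_self hr, by rwa [Set.mem_ofPred_eq, hρa]⟩
  have hνU : 0 < ν.real U := ENNReal.toReal_pos (hpos U hUo haU).ne' (measure_ne_top _ _)
  have key : ∀ N : ℕ, δ * ν.real U ≤ (θ / θ') ^ N * ∫ y, |F y| ∂ν := by
    intro N
    have hUi : Integrable (U.indicator fun _ => -(δ * θ' ^ N)) ν :=
      (integrable_const _).indicator hUo.measurableSet
    have hle : ∀ᵐ y ∂ν, F y * ρ y ^ N ≤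
        (U.indicator (fun _ => -(δ * θ' ^ N)) + fun y => θ ^ N * |F y|) y := by
      filter_upwards [hρ0, hθ] with y hρ0 hθ
      rw [Pi.add_apply]
      by_cases hyb : y ∈ Metric.ball a r
      · have hFy : F y < -δ := hball hyb
        have hFρ : F y * ρ y ^ N ≤ -(δ * ρ y ^ N) := by
          have := mul_le_mul_of_nonneg_right hFy.le (pow_nonneg hρ0 N)
          linarith
        have hn : 0 ≤ θ ^ N * |F y| := by positivity
        by_cases hyU : y ∈ U
        · rw [Set.indicator_of_mem hyU]
          have : θ' ^ N ≤ ρ y ^ N := pow_le_pow_left₀ (by linarith) hyU.2.le N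
          nlinarith
        · rw [Set.indicator_of_notMem hyU]
          have : 0 ≤ δ * ρ y ^ N := mul_nonneg hδ0.le (pow_nonneg hρ0 N)
          linarith
      · rw [Set.indicator_of_notMem fun h => hyb h.1, zero_add]
        calc F y * ρ y ^ N ≤ |F y| * ρ y ^ N :=
              mul_le_mul_of_nonneg_right (le_abs_self _) (pow_nonneg hρ0 N)
          _ ≤ |F y| * θ ^ N := by
              gcongr
              exact hθ hyb
          _ = _ := mul_comm _ _
    have hi : Integrable (fun y => F y * ρ y ^ N) ν := by
      refine hFi.mul_bdd (c := 1) (hρc.pow N).measurable.aestronglyMeasurable ?_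
      filter_upwards [hρ0, hρ1] with y h0 h1
      rw [Real.norm_of_nonneg (pow_nonneg h0 N)]
      exact pow_le_one₀ h0 h1
    have h2 := (hint N).trans (integral_mono_ae hi (hUi.add (hFi.abs.const_mul (θ ^ N))) hle)
    rw [integral_add' hUi (hFi.abs.const_mul (θ ^ N)), integral_const_mul,
      integral_indicator_const _ hUo.measurableSet, smul_eq_mul] at h2
    have hp : 0 < θ' ^ N := pow_pos (by linarith) N
    rw [div_pow, div_mul_eq_mul_div (θ ^ N), le_div_iff₀ hp]
    linarith
  have hlim : Filter.Tendsto (fun N : ℕ => (θ / θ') ^ N * ∫ y, |F y| ∂ν) Filter.atTop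
      (nhds (0 * ∫ y, |F y| ∂ν)) :=
    (tendsto_pow_atTop_nhds_zero_of_lt_one (div_nonneg hθ0.le (by linarith))
      ((div_lt_one (by linarith)).2 hθθ')).mul_const _
  rw [zero_mul] at hlim
  have := ge_of_tendsto' hlim key
  nlinarith

/-- Under Carleman's condition, a polynomial `f` with `∫ q² f dν ≥ 0` for every polynomial `q`
is nonnegative on the support of `ν`. -/
lemma eval_nonneg_of_integral_sq_nonneg {Y : Set (Fin m → ℝ)} (hsupp : hasSupport ν Y)
    (hcar : Carleman ν) (hmom : momentsFinite ν) {f : MvPolynomial (Fin m) ℝ}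
    (hpos : ∀ q : MvPolynomial (Fin m) ℝ, 0 ≤ ∫ y, MvPolynomial.eval y (q ^ 2 * f) ∂ν)
    {a : Fin m → ℝ} (ha : a ∈ Y) : 0 ≤ MvPolynomial.eval a f := by
  have := hmom.isFiniteMeasure
  refine nonneg_of_integral_mul_pow_nonneg (F := fun y => MvPolynomial.eval y f)
    (ρ := fun y => ∏ j, ((y j - a j) ^ 2 + 1)⁻¹) f.continuous_eval (hmom.integrable f) ?_
    (Filter.Eventually.of_forall fun y => prod_resolvent_nonneg _ a y)
    (Filter.Eventually.of_forall fun y => prod_resolvent_le_one _ a y) (by simp) ?_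
    (fun N => by simpa using integral_mul_pow_resolvent_nonneg hcar hmom f hpos a N 1)
    fun U hU haU => hsupp.2 U hU ⟨a, haU, ha⟩
  · refine continuous_finsetProd _ fun j _ => Continuous.inv₀ (by fun_prop) fun y => ?_
    positivity
  · intro r hr
    refine ⟨(r ^ 2 + 1)⁻¹, by positivity, inv_lt_one_of_one_lt₀ (by nlinarith),
      Filter.Eventually.of_forall fun y hy => ?_⟩
    rw [Metric.mem_ball, dist_pi_lt_iff hr] at hy
    push Not at hy
    obtain ⟨j, hj⟩ := hy
    rw [← Finset.mul_prod_erase _ _ (Finset.mem_univ j)]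
    have h1 : ((y j - a j) ^ 2 + 1)⁻¹ ≤ (r ^ 2 + 1)⁻¹ := by
      rw [Real.dist_eq] at hj
      rw [← sq_abs (y j - a j)]
      gcongr
    calc _ ≤ (r ^ 2 + 1)⁻¹ * 1 := by
          gcongr
          exact prod_resolvent_le_one _ a y
      _ = _ := mul_one _

end Peaking

section Riesz

variable {n p : ℕ}

/-- The linear functional on polynomials with moment sequence `s`. -/
noncomputable def riesz (s : (Fin n →₀ ℕ) → ℝ) : MvPolynomial (Fin n) ℝ →ₗ[ℝ] ℝ :=
  (MvPolynomial.basisMonomials (Fin n) ℝ).constr ℝ s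

lemma riesz_apply (s : (Fin n →₀ ℕ) → ℝ) (f : MvPolynomial (Fin n) ℝ) :
    riesz s f = ∑ α ∈ f.support, MvPolynomial.coeff α f * s α := by
  rw [riesz, Module.Basis.constr_apply]
  rfl

lemma riesz_monomial (s : (Fin n →₀ ℕ) → ℝ) (α : Fin n →₀ ℕ) (c : ℝ) :
    riesz s (MvPolynomial.monomial α c) = c * s α := by
  have h := (MvPolynomial.basisMonomials (Fin n) ℝ).constr_basis ℝ s α
  rw [MvPolynomial.coe_basisMonomials] at h
  rw [← mul_one c, ← smul_eq_mul c, ← MvPolynomial.smul_monomial, map_smul, riesz, h]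
  simp

lemma riesz_ext {T : MvPolynomial (Fin n) ℝ →ₗ[ℝ] ℝ} {s : (Fin n →₀ ℕ) → ℝ}
    (h : ∀ α, T (MvPolynomial.monomial α 1) = s α) : T = riesz s := by
  refine (MvPolynomial.basisMonomials (Fin n) ℝ).ext fun α => ?_
  rw [MvPolynomial.coe_basisMonomials]
  simp [h, riesz_monomial]

lemma riesz_add (s t : (Fin n →₀ ℕ) → ℝ) (f : MvPolynomial (Fin n) ℝ) :
    riesz (fun α => s α + t α) f = riesz s f + riesz t f := by
  simp only [riesz_apply, mul_add, Finset.sum_add_distrib]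

lemma riesz_smul (c : ℝ) (s : (Fin n →₀ ℕ) → ℝ) (f : MvPolynomial (Fin n) ℝ) :
    riesz (fun α => c * s α) f = c * riesz s f := by
  simp only [riesz_apply, Finset.mul_sum]
  exact Finset.sum_congr rfl fun α _ => by ring

lemma exists_riesz_monomial_mul_le {s : (Fin n →₀ ℕ) → ℝ} {C C₀ : ℝ}
    (hs : ∀ α, |s α| ≤ C₀ * C ^ (∑ i, α i)) (h : MvPolynomial (Fin n) ℝ) :
    ∃ C₁, ∀ α, |riesz s (h * MvPolynomial.monomial α 1)| ≤ C₁ * C ^ (∑ i, α i) := by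
  induction h using MvPolynomial.monomial_add_induction_on with
  | C a =>
    refine ⟨|a| * C₀, fun α => ?_⟩
    rw [MvPolynomial.C_mul_monomial, riesz_monomial, abs_mul, mul_one, mul_assoc]
    exact mul_le_mul_of_nonneg_left (hs α) (abs_nonneg a)
  | monomial_add β b f _ _ ih =>
    obtain ⟨C₁, hC₁⟩ := ih
    refine ⟨|b| * (C₀ * C ^ (∑ i, β i)) + C₁, fun α => ?_⟩
    rw [add_mul, map_add, MvPolynomial.monomial_mul, riesz_monomial, mul_one]
    refine (abs_add_le _ _).trans ?_
    rw [add_mul, abs_mul]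
    refine add_le_add ?_ (hC₁ α)
    have := hs (β + α)
    simp only [Finsupp.add_apply, Finset.sum_add_distrib, pow_add] at this
    rw [mul_assoc]
    exact mul_le_mul_of_nonneg_left (by linarith) (abs_nonneg b)

lemma le_one_of_pow_two_pow_le {r B : ℝ} (h : ∀ k : ℕ, r ^ 2 ^ k ≤ B) : r ≤ 1 := by
  by_contra! hr
  obtain ⟨k, hk⟩ := pow_unbounded_of_one_lt B hr
  have h2 := (pow_le_pow_right₀ hr.le (Nat.lt_two_pow_self (n := k)).le).trans (h k)
  linarith

/-- An exponentially bounded functional that is nonnegative on squares is bounded with its own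
mass as the constant. -/
lemma abs_monomial_le_of_exp_bound {T : MvPolynomial (Fin n) ℝ →ₗ[ℝ] ℝ}
    (hT : ∀ f, 0 ≤ T (f * f)) {C C₀ : ℝ} (hC : 0 < C)
    (hb : ∀ α, |T (MvPolynomial.monomial α 1)| ≤ C₀ * C ^ (∑ i, α i)) (α : Fin n →₀ ℕ) :
    |T (MvPolynomial.monomial α 1)| ≤ T 1 * C ^ (∑ i, α i) := by
  have hcs : ∀ β, T (MvPolynomial.monomial β 1) ^ 2 ≤
      T 1 * T (MvPolynomial.monomial (2 • β) 1) := by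
    intro β
    have := sq_le_mul_of_nonneg_sq hT 1 (MvPolynomial.monomial β 1)
    rwa [one_mul, one_mul, MvPolynomial.monomial_mul, one_mul, ← two_smul ℕ β] at this
  have h1 : 0 ≤ T 1 := by simpa using hT 1
  rcases h1.eq_or_lt with h0 | h0
  · have := hcs α
    rw [← h0, zero_mul] at this
    rw [← h0, zero_mul, pow_eq_zero_iff (two_ne_zero) |>.1 (le_antisymm this (sq_nonneg _)),
      abs_zero]
  have hk : ∀ k : ℕ, T 1 * |T (MvPolynomial.monomial α 1)| ^ 2 ^ k ≤
      T 1 ^ 2 ^ k * |T (MvPolynomial.monomial (2 ^ k • α) 1)| := by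
    intro k
    induction k with
    | zero => simp
    | succ k ih =>
      have h2 := hcs (2 ^ k • α)
      rw [← mul_smul, ← pow_succ'] at h2
      have h3 := pow_le_pow_left₀ (by positivity) ih 2
      rw [mul_pow, mul_pow, sq_abs, ← pow_mul, ← pow_mul, ← pow_succ] at h3
      have h4 := h3.trans (mul_le_mul_of_nonneg_left h2 (by positivity))
      have h5 : T 1 * (T 1 * |T (MvPolynomial.monomial α 1)| ^ 2 ^ (k + 1)) ≤
          T 1 * (T 1 ^ 2 ^ (k + 1) * |T (MvPolynomial.monomial (2 ^ (k + 1) • α) 1)|) := by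
        refine le_trans (le_of_eq (by ring)) (h4.trans ?_)
        refine le_trans ?_ (le_of_eq (by ring :
          T 1 ^ 2 ^ (k + 1) * (T 1 * |T (MvPolynomial.monomial (2 ^ (k + 1) • α) 1)|) = _))
        gcongr
        exact le_abs_self _
      exact le_of_mul_le_mul_left h5 h0
  have hCα : 0 < C ^ (∑ i, α i) := by positivity
  have hr : |T (MvPolynomial.monomial α 1)| / (T 1 * C ^ (∑ i, α i)) ≤ 1 := by
    refine le_one_of_pow_two_pow_le (B := C₀ / T 1) fun k => ?_
    rw [div_pow, div_le_div_iff₀ (by positivity) h0]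
    have h6 := hb (2 ^ k • α)
    simp only [Finsupp.smul_apply, smul_eq_mul, ← Finset.mul_sum] at h6
    calc _ = T 1 * |T (MvPolynomial.monomial α 1)| ^ 2 ^ k := mul_comm _ _
      _ ≤ _ := hk k
      _ ≤ T 1 ^ 2 ^ k * (C₀ * C ^ (2 ^ k * ∑ i, α i)) := by gcongr
      _ = _ := by rw [mul_pow, ← pow_mul, mul_comm (2 ^ k)]; ring
  exact (div_le_one (by positivity)).1 hr

end Riesz

section PositiveSequences

variable {n p : ℕ}

/-- A symmetric matrix sequence whose moment functional is nonnegative on squares of vectors. -/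
structure IsPosSeq (S : (Fin n →₀ ℕ) → Fin p → Fin p → ℝ) : Prop where
  symm : ∀ α i j, S α i j = S α j i
  nonneg : ∀ g : Fin p → MvPolynomial (Fin n) ℝ,
    0 ≤ ∑ i, ∑ j, riesz (fun α => S α i j) (g i * g j)

/-- The functional `f ↦ ∑ L_{ij}(g_i g_j f)`. -/
noncomputable def quadFunctional (S : (Fin n →₀ ℕ) → Fin p → Fin p → ℝ)
    (g : Fin p → MvPolynomial (Fin n) ℝ) : MvPolynomial (Fin n) ℝ →ₗ[ℝ] ℝ :=
  ∑ i, ∑ j, riesz (fun α => S α i j) ∘ₗ LinearMap.mulLeft ℝ (g i * g j)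

lemma quadFunctional_apply (S : (Fin n →₀ ℕ) → Fin p → Fin p → ℝ)
    (g : Fin p → MvPolynomial (Fin n) ℝ) (f : MvPolynomial (Fin n) ℝ) :
    quadFunctional S g f = ∑ i, ∑ j, riesz (fun α => S α i j) (g i * g j * f) := by
  simp [quadFunctional, LinearMap.sum_apply, mul_assoc]

lemma IsPosSeq.quadFunctional_sq_nonneg {S : (Fin n →₀ ℕ) → Fin p → Fin p → ℝ}
    (hS : IsPosSeq S) (g : Fin p → MvPolynomial (Fin n) ℝ) (f : MvPolynomial (Fin n) ℝ) :
    0 ≤ quadFunctional S g (f * f) := by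
  have := hS.nonneg fun i => g i * f
  rw [quadFunctional_apply]
  simpa only [mul_mul_mul_comm] using this

lemma IsPosSeq.abs_quadFunctional_le {S : (Fin n →₀ ℕ) → Fin p → Fin p → ℝ}
    (hS : IsPosSeq S) {C C₀ : ℝ} (hC : 0 < C)
    (hb : ∀ α i j, |S α i j| ≤ C₀ * C ^ (∑ i, α i))
    (g : Fin p → MvPolynomial (Fin n) ℝ) (α : Fin n →₀ ℕ) :
    |quadFunctional S g (MvPolynomial.monomial α 1)| ≤
      quadFunctional S g 1 * C ^ (∑ i, α i) := by
  choose B hB using fun i j => exists_riesz_monomial_mul_le (fun α => hb α i j) (g i * g j)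
  refine abs_monomial_le_of_exp_bound (hS.quadFunctional_sq_nonneg g) hC
    (C₀ := ∑ i, ∑ j, B i j) (fun α => ?_) α
  rw [quadFunctional_apply, Finset.sum_mul]
  refine (Finset.abs_sum_le_sum_abs _ _).trans (Finset.sum_le_sum fun i _ => ?_)
  rw [Finset.sum_mul]
  exact (Finset.abs_sum_le_sum_abs _ _).trans (Finset.sum_le_sum fun j _ => hB i j α)

lemma sum_sum_ite_mul {p : ℕ} (i j : Fin p) (a b : ℝ) (M : Fin p → Fin p → ℝ) :
    ∑ k, ∑ l, (Pi.single i a + Pi.single j b : Fin p → ℝ) k *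
      (Pi.single i a + Pi.single j b : Fin p → ℝ) l * M k l =
      a * a * M i i + a * b * M i j + b * a * M j i + b * b * M j j := by
  simp only [Pi.add_apply, add_mul, mul_add, Finset.sum_add_distrib]
  simp [Pi.single_apply]
  ring

lemma quadFunctional_C_monomial (S : (Fin n →₀ ℕ) → Fin p → Fin p → ℝ) (v : Fin p → ℝ)
    (α : Fin n →₀ ℕ) :
    quadFunctional S (fun i => MvPolynomial.C (v i)) (MvPolynomial.monomial α 1) =
      ∑ i, ∑ j, v i * v j * S α i j := by
  rw [quadFunctional_apply]
  simp only [← MvPolynomial.C_mul, MvPolynomial.C_mul_monomial, riesz_monomial, mul_one]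

lemma IsPosSeq.quadForm_nonneg {S : (Fin n →₀ ℕ) → Fin p → Fin p → ℝ}
    (hS : IsPosSeq S) (v : Fin p → ℝ) : 0 ≤ ∑ i, ∑ j, v i * v j * S 0 i j := by
  have := hS.quadFunctional_sq_nonneg (fun i => MvPolynomial.C (v i)) 1
  rw [one_mul] at this
  rw [← quadFunctional_C_monomial]
  simpa using this

lemma IsPosSeq.diag_nonneg {S : (Fin n →₀ ℕ) → Fin p → Fin p → ℝ}
    (hS : IsPosSeq S) (i : Fin p) : 0 ≤ S 0 i i := by
  have := hS.quadForm_nonneg (Pi.single i 1 + Pi.single i 0)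
  rw [sum_sum_ite_mul] at this
  linarith

/-- Exponential boundedness of a positive sequence, with the trace of `S 0` as the constant. -/
lemma IsPosSeq.abs_le_trace {S : (Fin n →₀ ℕ) → Fin p → Fin p → ℝ}
    (hS : IsPosSeq S) {C C₀ : ℝ} (hC : 0 < C)
    (hb : ∀ α i j, |S α i j| ≤ C₀ * C ^ (∑ i, α i)) (α : Fin n →₀ ℕ) (i j : Fin p) :
    |S α i j| ≤ (∑ k, S 0 k k) * C ^ (∑ i, α i) := by
  have hpm : ∀ b : ℝ, |S α i i + b * S α i j + b * S α j i + b * b * S α j j| ≤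
      (S 0 i i + b * S 0 i j + b * S 0 j i + b * b * S 0 j j) * C ^ (∑ i, α i) := by
    intro b
    have := hS.abs_quadFunctional_le hC hb
      (fun k => MvPolynomial.C ((Pi.single i 1 + Pi.single j b : Fin p → ℝ) k)) α
    have h1 : (1 : MvPolynomial (Fin n) ℝ) = MvPolynomial.monomial 0 1 := rfl
    rw [h1, quadFunctional_C_monomial, quadFunctional_C_monomial, sum_sum_ite_mul,
      sum_sum_ite_mul] at this
    simpa using this
  have hp := hpm 1
  have hm := hpm (-1)
  have hCα : 0 < C ^ (∑ i, α i) := by positivity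
  have hle : ∀ k, S 0 k k ≤ ∑ k, S 0 k k := fun k =>
    Finset.single_le_sum (f := fun k => S 0 k k) (fun k _ => hS.diag_nonneg k) (Finset.mem_univ k)
  have h2 : (S 0 i i + S 0 j j) / 2 * C ^ (∑ i, α i) ≤ (∑ k, S 0 k k) * C ^ (∑ i, α i) := by
    gcongr
    linarith [hle i, hle j]
  refine le_trans ?_ h2
  rw [abs_le] at hp hm ⊢
  rw [hS.symm α j i, hS.symm 0 j i] at hp hm
  constructor <;> linarith [hp.1, hp.2, hm.1, hm.2]

/-- The sequence of the functional `f ↦ L(f h)`. -/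
noncomputable def mulSeq (h : MvPolynomial (Fin n) ℝ) (S : (Fin n →₀ ℕ) → Fin p → Fin p → ℝ) :
    (Fin n →₀ ℕ) → Fin p → Fin p → ℝ :=
  fun α i j => riesz (fun β => S β i j) (h * MvPolynomial.monomial α 1)

lemma riesz_mulSeq (h : MvPolynomial (Fin n) ℝ) (S : (Fin n →₀ ℕ) → Fin p → Fin p → ℝ)
    (i j : Fin p) (f : MvPolynomial (Fin n) ℝ) :
    riesz (fun α => mulSeq h S α i j) f = riesz (fun α => S α i j) (h * f) := by
  have : riesz (fun α => S α i j) ∘ₗ LinearMap.mulLeft ℝ h = riesz fun α => mulSeq h S α i j :=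
    riesz_ext fun α => rfl
  rw [← this]
  rfl

lemma exists_mulSeq_bound {S : (Fin n →₀ ℕ) → Fin p → Fin p → ℝ} {C C₀ : ℝ} (hC : 0 < C)
    (hb : ∀ α i j, |S α i j| ≤ C₀ * C ^ (∑ i, α i)) (h : MvPolynomial (Fin n) ℝ) :
    ∃ C₁, ∀ α i j, |mulSeq h S α i j| ≤ C₁ * C ^ (∑ i, α i) := by
  choose B hB using fun i j => exists_riesz_monomial_mul_le (fun α => hb α i j) h
  refine ⟨∑ i, ∑ j, |B i j|, fun α i j => (hB i j α).trans ?_⟩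
  gcongr
  refine (le_abs_self _).trans ?_
  refine le_trans ?_ (Finset.single_le_sum (f := fun i => ∑ j, |B i j|)
    (fun i _ => Finset.sum_nonneg fun j _ => abs_nonneg _) (Finset.mem_univ i))
  exact Finset.single_le_sum (f := fun j => |B i j|) (fun j _ => abs_nonneg _)
    (Finset.mem_univ j)

lemma mulSeq_one_add_smul_X (S : (Fin n →₀ ℕ) → Fin p → Fin p → ℝ) (c : ℝ) (l : Fin n)
    (α : Fin n →₀ ℕ) (i j : Fin p) :
    mulSeq (1 + MvPolynomial.C c * MvPolynomial.X l) S α i j =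
      S α i j + c * S (α + Finsupp.single l 1) i j := by
  rw [mulSeq, add_mul, one_mul, map_add, riesz_monomial, MvPolynomial.X,
    MvPolynomial.C_mul_monomial, MvPolynomial.monomial_mul, riesz_monomial, add_comm α]
  ring

lemma IsPosSeq.mulSeq {S : (Fin n →₀ ℕ) → Fin p → Fin p → ℝ}
    (hS : IsPosSeq S) {C C₀ : ℝ} (hC : 0 < C)
    (hb : ∀ α i j, |S α i j| ≤ C₀ * C ^ (∑ i, α i)) (l : Fin n) {c : ℝ} (hc : |c| * C ≤ 1) :
    IsPosSeq (mulSeq (1 + MvPolynomial.C c * MvPolynomial.X l) S) where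
  symm α i j := by
    rw [mulSeq_one_add_smul_X, mulSeq_one_add_smul_X, hS.symm α, hS.symm (α + _)]
  nonneg g := by
    have h := hS.abs_quadFunctional_le hC hb g (Finsupp.single l 1)
    have h1 : ∑ k, (Finsupp.single l 1 : Fin n →₀ ℕ) k = 1 := by
      simp [Finsupp.single_apply]
    rw [h1, pow_one] at h
    have h2 : ∑ i, ∑ j, riesz (fun α => _root_.mulSeq
        (1 + MvPolynomial.C c * MvPolynomial.X l) S α i j) (g i * g j) =
        quadFunctional S g 1 + c * quadFunctional S g (MvPolynomial.monomial
          (Finsupp.single l 1) 1) := by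
      rw [← smul_eq_mul c, ← map_smul, ← map_add, quadFunctional_apply]
      refine Finset.sum_congr rfl fun i _ => Finset.sum_congr rfl fun j _ => ?_
      rw [riesz_mulSeq, mul_comm, MvPolynomial.smul_eq_C_mul]
      rfl
    rw [h2]
    have h0 : 0 ≤ quadFunctional S g 1 := by
      simpa using hS.quadFunctional_sq_nonneg g 1
    have h3 : |c * quadFunctional S g (MvPolynomial.monomial (Finsupp.single l 1) 1)| ≤
        quadFunctional S g 1 := by
      rw [abs_mul]
      calc _ ≤ |c| * (quadFunctional S g 1 * C) := by gcongr
        _ = |c| * C * quadFunctional S g 1 := by ring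
        _ ≤ 1 * quadFunctional S g 1 := by gcongr
        _ = _ := one_mul _
    linarith [(abs_le.1 h3).1]

lemma IsPosSeq.add {S T : (Fin n →₀ ℕ) → Fin p → Fin p → ℝ} (hS : IsPosSeq S)
    (hT : IsPosSeq T) : IsPosSeq (S + T) where
  symm α i j := by simp only [Pi.add_apply, hS.symm α i j, hT.symm α i j]
  nonneg g := by
    simp only [Pi.add_apply, riesz_add, Finset.sum_add_distrib]
    exact add_nonneg (hS.nonneg g) (hT.nonneg g)

lemma IsPosSeq.smul {S : (Fin n →₀ ℕ) → Fin p → Fin p → ℝ} (hS : IsPosSeq S) {c : ℝ}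
    (hc : 0 ≤ c) : IsPosSeq (c • S) where
  symm α i j := by simp only [Pi.smul_apply, hS.symm α i j]
  nonneg g := by
    simp only [Pi.smul_apply, smul_eq_mul, riesz_smul, ← Finset.mul_sum]
    exact mul_nonneg hc (hS.nonneg g)

end PositiveSequences

section KreinMilman

variable {n p : ℕ}

/-- Normalized positive sequences with growth controlled by `C`. -/
def normalizedSeqs (n p : ℕ) (C : ℝ) : Set ((Fin n →₀ ℕ) → Fin p → Fin p → ℝ) :=
  {S | IsPosSeq S ∧ (∀ α i j, |S α i j| ≤ C ^ (∑ i, α i)) ∧ ∑ i, S 0 i i = 1}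

/-- Pairs of a point of the box `[-C, C]ⁿ` and a positive semidefinite matrix of trace one. -/
def boxStates (n p : ℕ) (C : ℝ) : Set ((Fin n → ℝ) × (Fin p → Fin p → ℝ)) :=
  {e | (∀ l, |e.1 l| ≤ C) ∧ (∀ i j, e.2 i j = e.2 j i) ∧
    (∀ v : Fin p → ℝ, 0 ≤ ∑ i, ∑ j, v i * v j * e.2 i j) ∧ (∑ i, e.2 i i = 1) ∧
    ∀ i j, |e.2 i j| ≤ 1}

lemma convex_normalizedSeqs (C : ℝ) : Convex ℝ (normalizedSeqs n p C) := by
  rintro S ⟨hS, hSb, hSt⟩ T ⟨hT, hTb, hTt⟩ a b ha hb hab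
  refine ⟨(hS.smul ha).add (hT.smul hb), fun α i j => ?_, ?_⟩
  · simp only [Pi.add_apply, Pi.smul_apply, smul_eq_mul]
    calc _ ≤ |a * S α i j| + |b * T α i j| := abs_add_le _ _
      _ ≤ a * C ^ (∑ i, α i) + b * C ^ (∑ i, α i) := by
          rw [abs_mul, abs_mul, abs_of_nonneg ha, abs_of_nonneg hb]
          exact add_le_add (mul_le_mul_of_nonneg_left (hSb α i j) ha)
            (mul_le_mul_of_nonneg_left (hTb α i j) hb)
      _ = _ := by rw [← add_mul, hab, one_mul]
  · simp only [Pi.add_apply, Pi.smul_apply, smul_eq_mul, Finset.sum_add_distrib,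
      ← Finset.mul_sum, hSt, hTt, mul_one, hab]

lemma continuous_riesz_coord (i j : Fin p) (f : MvPolynomial (Fin n) ℝ) :
    Continuous fun S : (Fin n →₀ ℕ) → Fin p → Fin p → ℝ => riesz (fun α => S α i j) f := by
  simp only [riesz_apply]
  fun_prop

lemma isCompact_normalizedSeqs (C : ℝ) : IsCompact (normalizedSeqs n p C) := by
  have hK : IsCompact (Set.pi Set.univ fun α : Fin n →₀ ℕ => Set.pi Set.univ fun _ : Fin p =>
      Set.pi Set.univ fun _ : Fin p => Set.Icc (-C ^ (∑ i, α i)) (C ^ (∑ i, α i))) :=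
    isCompact_univ_pi fun α => isCompact_univ_pi fun _ => isCompact_univ_pi fun _ => isCompact_Icc
  refine hK.of_isClosed_subset ?_ fun S hS α _ i _ j _ => abs_le.1 (hS.2.1 α i j)
  have hset : normalizedSeqs n p C = (⋂ α, ⋂ i, ⋂ j, {S | S α i j = S α j i}) ∩
      (⋂ g : Fin p → MvPolynomial (Fin n) ℝ,
        {S | 0 ≤ ∑ i, ∑ j, riesz (fun α => S α i j) (g i * g j)}) ∩
      (⋂ α, ⋂ i, ⋂ j, {S | |S α i j| ≤ C ^ (∑ i, α i)}) ∩ {S | ∑ i, S 0 i i = 1} := by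
    ext S
    simp only [normalizedSeqs, Set.mem_inter_iff, Set.mem_iInter, Set.mem_ofPred_eq]
    exact ⟨fun h => ⟨⟨⟨h.1.symm, h.1.nonneg⟩, h.2.1⟩, h.2.2⟩,
      fun h => ⟨⟨h.1.1.1, h.1.1.2⟩, h.1.2, h.2⟩⟩
  rw [hset]
  refine ((IsClosed.inter ?_ ?_).inter ?_).inter ?_
  · refine isClosed_iInter fun α => isClosed_iInter fun i => isClosed_iInter fun j =>
      isClosed_eq (by fun_prop) (by fun_prop)
  · exact isClosed_iInter fun g => isClosed_le continuous_const
      (continuous_finsetSum _ fun i _ => continuous_finsetSum _ fun j _ =>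
        continuous_riesz_coord i j _)
  · exact isClosed_iInter fun α => isClosed_iInter fun i => isClosed_iInter fun j =>
      isClosed_le (by fun_prop) continuous_const
  · exact isClosed_eq (by fun_prop) continuous_const

lemma isCompact_boxStates (C : ℝ) : IsCompact (boxStates n p C) := by
  have hK : IsCompact ((Set.pi Set.univ fun _ : Fin n => Set.Icc (-C) C) ×ˢ
      (Set.pi Set.univ fun _ : Fin p => Set.pi Set.univ fun _ : Fin p => Set.Icc (-1 : ℝ) 1)) :=
    (isCompact_univ_pi fun _ => isCompact_Icc).prod
      (isCompact_univ_pi fun _ => isCompact_univ_pi fun _ => isCompact_Icc)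
  refine hK.of_isClosed_subset ?_ fun e he => ⟨fun l _ => abs_le.1 (he.1 l),
    fun i _ j _ => abs_le.1 (he.2.2.2.2 i j)⟩
  simp only [boxStates, Set.ofPred_and, Set.ofPred_forall]
  refine IsClosed.inter ?_ (IsClosed.inter ?_ (IsClosed.inter ?_ (IsClosed.inter ?_ ?_)))
  · exact isClosed_iInter fun l => isClosed_le (by fun_prop) continuous_const
  · exact isClosed_iInter fun i => isClosed_iInter fun j =>
      isClosed_eq (by fun_prop) (by fun_prop)
  · exact isClosed_iInter fun v => isClosed_le continuous_const (by fun_prop)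
  · exact isClosed_eq (by fun_prop) continuous_const
  · exact isClosed_iInter fun i => isClosed_iInter fun j =>
      isClosed_le (by fun_prop) continuous_const

lemma IsPosSeq.normalize_mem {S : (Fin n →₀ ℕ) → Fin p → Fin p → ℝ}
    (hS : IsPosSeq S) {C C₀ : ℝ} (hC : 0 < C)
    (hb : ∀ α i j, |S α i j| ≤ C₀ * C ^ (∑ i, α i)) (h0 : 0 < ∑ k, S 0 k k) :
    (∑ k, S 0 k k)⁻¹ • S ∈ normalizedSeqs n p C := by
  refine ⟨hS.smul (by positivity), fun α i j => ?_, ?_⟩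
  · simp only [Pi.smul_apply, smul_eq_mul]
    rw [abs_mul, abs_of_pos (by positivity : 0 < (∑ k, S 0 k k)⁻¹), inv_mul_le_iff₀ h0]
    exact hS.abs_le_trace hC hb α i j
  · simp only [Pi.smul_apply, smul_eq_mul, ← Finset.mul_sum]
    exact inv_mul_cancel₀ (ne_of_gt h0)

/-- At an extreme point, multiplication by `1 + c x_l` acts as a scalar. -/
lemma mulSeq_eq_of_mem_extremePoints {C : ℝ} (hC : 0 < C)
    {S : (Fin n →₀ ℕ) → Fin p → Fin p → ℝ}
    (hS : S ∈ Set.extremePoints ℝ (normalizedSeqs n p C)) (l : Fin n) (α : Fin n →₀ ℕ)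
    (i j : Fin p) :
    S (α + Finsupp.single l 1) i j = (∑ k, S (Finsupp.single l 1) k k) * S α i j := by
  obtain ⟨⟨hpos, hb, htr⟩, hext⟩ := hS
  have hb' : ∀ α i j, |S α i j| ≤ 1 * C ^ (∑ i, α i) := by simpa using hb
  have hc : |C⁻¹| * C ≤ 1 := by
    rw [abs_of_pos (by positivity), inv_mul_cancel₀ hC.ne']
  have hc' : |-C⁻¹| * C ≤ 1 := by rwa [abs_neg]
  set P := mulSeq (1 + MvPolynomial.C C⁻¹ * MvPolynomial.X l) S with hP
  set M := mulSeq (1 + MvPolynomial.C (-C⁻¹) * MvPolynomial.X l) S with hM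
  have hPpos : IsPosSeq P := hpos.mulSeq hC hb' l hc
  have hMpos : IsPosSeq M := hpos.mulSeq hC hb' l hc'
  obtain ⟨BP, hBP⟩ := exists_mulSeq_bound hC hb' (1 + MvPolynomial.C C⁻¹ * MvPolynomial.X l)
  obtain ⟨BM, hBM⟩ := exists_mulSeq_bound hC hb' (1 + MvPolynomial.C (-C⁻¹) * MvPolynomial.X l)
  have hPv : ∀ α i j, P α i j = S α i j + C⁻¹ * S (α + Finsupp.single l 1) i j :=
    fun α i j => mulSeq_one_add_smul_X S _ l α i j
  have hMv : ∀ α i j, M α i j = S α i j + -C⁻¹ * S (α + Finsupp.single l 1) i j :=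
    fun α i j => mulSeq_one_add_smul_X S _ l α i j
  set τ := ∑ k, S (Finsupp.single l 1) k k with hτ
  have hPt : ∑ k, P 0 k k = 1 + C⁻¹ * τ := by
    simp only [hPv, zero_add, Finset.sum_add_distrib, ← Finset.mul_sum, htr, hτ]
  have hMt : ∑ k, M 0 k k = 1 - C⁻¹ * τ := by
    simp only [hMv, zero_add, Finset.sum_add_distrib, ← Finset.mul_sum, htr, hτ]
    ring
  have hP0 : 0 ≤ ∑ k, P 0 k k := Finset.sum_nonneg fun k _ => hPpos.diag_nonneg k
  have hM0 : 0 ≤ ∑ k, M 0 k k := Finset.sum_nonneg fun k _ => hMpos.diag_nonneg k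
  suffices h : P α i j = (∑ k, P 0 k k) * S α i j by
    rw [hPv, hPt] at h
    have : C⁻¹ * S (α + Finsupp.single l 1) i j = C⁻¹ * (τ * S α i j) := by linarith
    exact mul_left_cancel₀ (inv_ne_zero hC.ne') this
  rcases hP0.eq_or_lt with hPz | hPpos'
  · have := hPpos.abs_le_trace hC hBP α i j
    rw [← hPz, zero_mul] at this ⊢
    exact abs_nonpos_iff.1 this
  rcases hM0.eq_or_lt with hMz | hMpos'
  · have := hMpos.abs_le_trace hC hBM α i j
    rw [← hMz, zero_mul] at this
    have h1 := abs_nonpos_iff.1 this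
    rw [hMv] at h1
    rw [hMt] at hMz
    rw [hPv, hPt]
    linear_combination -h1 - S α i j * hMz
  have hseg : S ∈ openSegment ℝ ((∑ k, P 0 k k)⁻¹ • P) ((∑ k, M 0 k k)⁻¹ • M) := by
    refine ⟨(∑ k, P 0 k k) / 2, (∑ k, M 0 k k) / 2, half_pos hPpos', half_pos hMpos', ?_, ?_⟩
    · rw [hPt, hMt]; ring
    · rw [smul_smul, smul_smul, div_mul_eq_mul_div, div_mul_eq_mul_div,
        mul_inv_cancel₀ hPpos'.ne', mul_inv_cancel₀ hMpos'.ne']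
      ext α i j
      simp only [Pi.add_apply, Pi.smul_apply, smul_eq_mul, hPv, hMv]
      ring
  have := hext (hPpos.normalize_mem hC hBP hPpos') (hMpos.normalize_mem hC hBM hMpos') hseg
  have h2 := congrFun (congrFun (congrFun this α) i) j
  simp only [Pi.smul_apply, smul_eq_mul] at h2
  rw [← h2, ← mul_assoc, mul_inv_cancel₀ hPpos'.ne', one_mul]

/-- Extreme points of the normalized sequences are point evaluations. -/
lemma exists_boxStates_of_mem_extremePoints {C : ℝ} (hC : 0 < C)
    {S : (Fin n →₀ ℕ) → Fin p → Fin p → ℝ}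
    (hS : S ∈ Set.extremePoints ℝ (normalizedSeqs n p C)) :
    ∃ e ∈ boxStates n p C, ∀ α i j, S α i j = (∏ l, e.1 l ^ α l) * e.2 i j := by
  have hmul := mulSeq_eq_of_mem_extremePoints hC hS
  obtain ⟨⟨hpos, hb, htr⟩, -⟩ := hS
  set u : Fin n → ℝ := fun l => ∑ k, S (Finsupp.single l 1) k k with hu
  have key : ∀ α β i j, S (β + α) i j = (∏ l, u l ^ α l) * S β i j := by
    intro α
    induction α using Finsupp.induction_linear with
    | zero => simp
    | add f g hf hg =>
      intro β i j
      rw [← add_assoc, hg, hf, ← mul_assoc, ← Finset.prod_mul_distrib]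
      congr 2
      ext l
      rw [Finsupp.add_apply, pow_add, mul_comm]
    | single l b =>
      intro β i j
      have hprod : ∏ k, u k ^ (Finsupp.single l b : Fin n →₀ ℕ) k = u l ^ b := by
        rw [Finset.prod_eq_single l] <;> simp +contextual [eq_comm]
      rw [hprod]
      clear hprod
      induction b with
      | zero => simp
      | succ b ih =>
        rw [Finsupp.single_add, ← add_assoc, hmul, ih, pow_succ, hu]
        ring
  refine ⟨(u, S 0), ⟨fun l => ?_, fun i j => hpos.symm 0 i j, hpos.quadForm_nonneg, htr,
    fun i j => by simpa using hb 0 i j⟩, fun α i j => by simpa using key α 0 i j⟩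
  have hb' : ∀ α i j, |S α i j| ≤ 1 * C ^ (∑ i, α i) := by simpa using hb
  have hS1 : ∀ i, |S (Finsupp.single l 1) i i| ≤ C * S 0 i i := by
    intro i
    have h1 : ∑ k, (Finsupp.single l 1 : Fin n →₀ ℕ) k = 1 := by simp [Finsupp.single_apply]
    have h := hpos.abs_quadFunctional_le hC hb'
      (fun k => MvPolynomial.C ((Pi.single i 1 + Pi.single i 0 : Fin p → ℝ) k))
      (Finsupp.single l 1)
    have h2 : (1 : MvPolynomial (Fin n) ℝ) = MvPolynomial.monomial 0 1 := rfl
    rw [h2, quadFunctional_C_monomial, quadFunctional_C_monomial, sum_sum_ite_mul,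
      sum_sum_ite_mul, h1] at h
    simpa [mul_comm] using h
  calc |u l| ≤ ∑ k, |S (Finsupp.single l 1) k k| := Finset.abs_sum_le_sum_abs _ _
    _ ≤ ∑ k, C * S 0 k k := Finset.sum_le_sum fun k _ => hS1 k
    _ = C := by rw [← Finset.mul_sum, htr, mul_one]

/-- Every normalized sequence is an average of point evaluations. -/
lemma exists_measure_of_mem_normalizedSeqs {C : ℝ} (hC : 0 < C)
    {S : (Fin n →₀ ℕ) → Fin p → Fin p → ℝ} (hS : S ∈ normalizedSeqs n p C) :
    ∃ μ : Measure (boxStates n p C), IsProbabilityMeasure μ ∧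
      ∀ α i j, S α i j = ∫ e, (∏ l, e.1.1 l ^ α l) * e.1.2 i j ∂μ := by
  have : CompactSpace (boxStates n p C) := isCompact_iff_compactSpace.1 (isCompact_boxStates C)
  let F : (Fin n →₀ ℕ) → Fin p → Fin p → BoundedContinuousFunction (boxStates n p C) ℝ :=
    fun α i j => BoundedContinuousFunction.mkOfCompact
      ⟨fun e => (∏ l, e.1.1 l ^ α l) * e.1.2 i j, by fun_prop⟩
  let Θ : ProbabilityMeasure (boxStates n p C) → (Fin n →₀ ℕ) → Fin p → Fin p → ℝ :=
    fun μ α i j => ∫ e, F α i j e ∂(μ : Measure (boxStates n p C))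
  have hΘ : Continuous Θ := continuous_pi fun α => continuous_pi fun i => continuous_pi fun j =>
    ProbabilityMeasure.continuous_integral_boundedContinuousFunction (F α i j)
  have hclosed : IsClosed (Set.range Θ) := (isCompact_range hΘ).isClosed
  have hconvex : Convex ℝ (Set.range Θ) := by
    rintro _ ⟨μ₁, rfl⟩ _ ⟨μ₂, rfl⟩ a b ha hb hab
    let μ : Measure (boxStates n p C) := ENNReal.ofReal a • (μ₁ : Measure (boxStates n p C)) +
      ENNReal.ofReal b • (μ₂ : Measure (boxStates n p C))
    have hμ : IsProbabilityMeasure μ := ⟨by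
      simp only [μ, Measure.add_apply, Measure.smul_apply, measure_univ, smul_eq_mul, mul_one]
      rw [← ENNReal.ofReal_add ha hb, hab, ENNReal.ofReal_one]⟩
    refine ⟨⟨μ, hμ⟩, ?_⟩
    ext α i j
    simp only [Θ, ProbabilityMeasure.coe_mk, μ, Pi.add_apply, Pi.smul_apply, smul_eq_mul]
    rw [integral_add_measure (((F α i j).integrable _).smul_measure ENNReal.ofReal_ne_top)
      (((F α i j).integrable _).smul_measure ENNReal.ofReal_ne_top), integral_smul_measure,
      integral_smul_measure, ENNReal.toReal_ofReal ha, ENNReal.toReal_ofReal hb, smul_eq_mul,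
      smul_eq_mul]
  have hsub : Set.extremePoints ℝ (normalizedSeqs n p C) ⊆ Set.range Θ := by
    intro T hT
    obtain ⟨e, he, hTe⟩ := exists_boxStates_of_mem_extremePoints hC hT
    refine ⟨⟨Measure.dirac ⟨e, he⟩, inferInstance⟩, ?_⟩
    ext α i j
    simp only [Θ, ProbabilityMeasure.coe_mk]
    rw [integral_dirac, hTe]
    rfl
  have hrange : normalizedSeqs n p C ⊆ Set.range Θ := by
    rw [← closure_convexHull_extremePoints (isCompact_normalizedSeqs C)
      (convex_normalizedSeqs C)]
    exact closure_minimal (convexHull_min hsub hconvex) hclosed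
  obtain ⟨μ, rfl⟩ := hrange hS
  exact ⟨μ, inferInstance, fun α i j => rfl⟩

/-- A positive exponentially bounded sequence is represented by a finite measure on pairs of a
point in the box and a positive semidefinite matrix. -/
lemma IsPosSeq.exists_measure {S : (Fin n →₀ ℕ) → Fin p → Fin p → ℝ}
    (hS : IsPosSeq S) {C C₀ : ℝ} (hC : 0 < C)
    (hb : ∀ α i j, |S α i j| ≤ C₀ * C ^ (∑ i, α i)) :
    ∃ μ : Measure ((Fin n → ℝ) × (Fin p → Fin p → ℝ)), IsFiniteMeasure μ ∧
      (∀ᵐ e ∂μ, e ∈ boxStates n p C) ∧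
      ∀ α i j, S α i j = ∫ e, (∏ l, e.1 l ^ α l) * e.2 i j ∂μ := by
  have h0 : 0 ≤ ∑ k, S 0 k k := Finset.sum_nonneg fun k _ => hS.diag_nonneg k
  rcases h0.eq_or_lt with hz | hpos
  · refine ⟨0, inferInstance, by simp, fun α i j => ?_⟩
    have := hS.abs_le_trace hC hb α i j
    rw [← hz, zero_mul] at this
    simpa using abs_nonpos_iff.1 this
  obtain ⟨μ, hμ, hrep⟩ := exists_measure_of_mem_normalizedSeqs hC (hS.normalize_mem hC hb hpos)
  have hmeas : MeasurableSet (boxStates n p C) := (isCompact_boxStates C).isClosed.measurableSet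
  refine ⟨ENNReal.ofReal (∑ k, S 0 k k) • μ.map Subtype.val,
    Measure.smul_finite _ ENNReal.ofReal_ne_top, ?_, fun α i j => ?_⟩
  · refine Measure.ae_smul_measure ?_ _
    refine (ae_map_iff (p := (· ∈ boxStates n p C)) measurable_subtype_coe.aemeasurable hmeas).2 ?_
    exact Filter.Eventually.of_forall fun e => e.2
  · have := hrep α i j
    rw [integral_smul_measure, (MeasurableEmbedding.subtype_coe hmeas).integral_map, ← this,
      ENNReal.toReal_ofReal hpos.le]
    simp only [Pi.smul_apply, smul_eq_mul]
    rw [← mul_assoc, mul_inv_cancel₀ hpos.ne', one_mul]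

end KreinMilman

section SpectralNorm

variable {p : ℕ}

lemma abs_apply_le_specNorm (A : Matrix (Fin p) (Fin p) ℝ) (i j : Fin p) :
    |A i j| ≤ specNorm A := by
  have h := (Matrix.toEuclideanLin A).toContinuousLinearMap.le_opNorm (EuclideanSpace.single j 1)
  rw [PiLp.norm_single, norm_one, mul_one] at h
  refine le_trans ?_ h
  refine le_trans (le_of_eq ?_) (PiLp.norm_apply_le _ i)
  simp [Matrix.toLpLin_apply, Matrix.mulVec_single]

lemma specNorm_le_sum_abs (A : Matrix (Fin p) (Fin p) ℝ) :
    specNorm A ≤ ∑ i, ∑ j, |A i j| := by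
  refine ContinuousLinearMap.opNorm_le_bound _
    (Finset.sum_nonneg fun i _ => Finset.sum_nonneg fun j _ => abs_nonneg _) fun x => ?_
  have hsum : (Matrix.toEuclideanLin A).toContinuousLinearMap x =
      ∑ i, EuclideanSpace.single i ((A *ᵥ x) i) := by
    ext k
    simp [Matrix.toLpLin_apply, Finset.sum_apply, Pi.single_apply]
  rw [hsum, Finset.sum_mul]
  refine (norm_sum_le _ _).trans (Finset.sum_le_sum fun i _ => ?_)
  rw [PiLp.norm_single, Matrix.mulVec, dotProduct, Finset.sum_mul]
  refine (norm_sum_le _ _).trans (Finset.sum_le_sum fun j _ => ?_)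
  rw [norm_mul, Real.norm_eq_abs]
  exact mul_le_mul_of_nonneg_left (PiLp.norm_apply_le _ j) (abs_nonneg _)

end SpectralNorm

section MomentMatrix

variable {n p : ℕ}

lemma dotProduct_mulVec_eq_sum {ι : Type*} [Fintype ι] (M : Matrix ι ι ℝ) (c : ι → ℝ) :
    star c ⬝ᵥ M *ᵥ c = ∑ a, ∑ b, c a * c b * M a b := by
  simp only [dotProduct, Matrix.mulVec, Pi.star_apply, star_trivial, Finset.mul_sum]
  exact Finset.sum_congr rfl fun a _ => Finset.sum_congr rfl fun b _ => by ring

lemma sum_momentMatrix_eq (S : (Fin n →₀ ℕ) → Matrix (Fin p) (Fin p) ℝ) {N : ℕ}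
    (idx : Fin N → (Fin n →₀ ℕ)) (c : Fin N × Fin p → ℝ) :
    ∑ a, ∑ b, c a * c b * S (idx a.1 + idx b.1) a.2 b.2 =
      ∑ i, ∑ j, riesz (fun α => S α i j)
        ((∑ a, MvPolynomial.monomial (idx a) (c (a, i))) *
          ∑ b, MvPolynomial.monomial (idx b) (c (b, j))) := by
  simp only [Finset.sum_mul_sum, map_sum, MvPolynomial.monomial_mul, riesz_monomial,
    Fintype.sum_prod_type_right]
  refine Finset.sum_congr rfl fun i _ => ?_
  rw [Finset.sum_comm]

lemma MomentPSD.isPosSeq {S : (Fin n →₀ ℕ) → Matrix (Fin p) (Fin p) ℝ} (hS : MomentPSD S)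
    (hsym : ∀ α, (S α).IsSymm) : IsPosSeq (fun α i j => S α i j) where
  symm α i j := (hsym α).apply j i
  nonneg g := by
    set s : Finset (Fin n →₀ ℕ) := Finset.univ.biUnion fun i => (g i).support with hs
    set idx : Fin s.card → (Fin n →₀ ℕ) := fun a => (s.equivFin.symm a : Fin n →₀ ℕ) with hidx
    have h := (hS s.card idx).dotProduct_mulVec_nonneg
      fun a => MvPolynomial.coeff (idx a.1) (g a.2)
    rw [dotProduct_mulVec_eq_sum] at h
    simp only [Matrix.of_apply] at h
    rw [sum_momentMatrix_eq S idx (fun a => MvPolynomial.coeff (idx a.1) (g a.2))] at h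
    have hg : ∀ i, ∑ a, MvPolynomial.monomial (idx a) (MvPolynomial.coeff (idx a) (g i)) = g i := by
      intro i
      rw [hidx]
      rw [Equiv.sum_comp s.equivFin.symm fun α : s =>
        MvPolynomial.monomial (α : Fin n →₀ ℕ) (MvPolynomial.coeff (α : Fin n →₀ ℕ) (g i)),
        Finset.sum_coe_sort s fun α => MvPolynomial.monomial α (MvPolynomial.coeff α (g i))]
      conv_rhs => rw [MvPolynomial.as_sum (g i)]
      refine (Finset.sum_subset (Finset.subset_biUnion_of_mem (fun i => (g i).support)
        (Finset.mem_univ i)) fun α _ hα => ?_).symm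
      rw [MvPolynomial.notMem_support_iff.1 hα, map_zero]
    simpa only [hg] using h

end MomentMatrix

section Localizing

variable {n m p q : ℕ}

/-- The exponent in the variables `x ⊕ y` with the given `x`- and `y`-parts. -/
noncomputable def joinExpo {d k : ℕ} (a : Expo n d × Expo m k) : (Fin n ⊕ Fin m) →₀ ℕ :=
  Finsupp.equivFunOnFinite.symm (Sum.elim (fun i => (a.1.1 i : ℕ)) fun j => (a.2.1 j : ℕ))

lemma joinExpo_injective {d k : ℕ} :
    Function.Injective (joinExpo : Expo n d × Expo m k → (Fin n ⊕ Fin m) →₀ ℕ) := by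
  intro a b hab
  have h := Finsupp.equivFunOnFinite.symm.injective hab
  refine Prod.ext (Subtype.ext (funext fun i => Fin.ext ?_))
    (Subtype.ext (funext fun j => Fin.ext ?_))
  · exact congrFun h (Sum.inl i)
  · exact congrFun h (Sum.inr j)

lemma exists_joinExpo_eq {N : ℕ} (e : (Fin n ⊕ Fin m) →₀ ℕ) (he : ∑ i, e i ≤ N) :
    ∃ a : Expo n N × Expo m N, joinExpo a = e := by
  rw [Fintype.sum_sum_type] at he
  have h1 : ∀ i, e (Sum.inl i) < N + 1 := fun i => by
    have := Finset.single_le_sum (f := fun i => e (Sum.inl i)) (fun _ _ => Nat.zero_le _)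
      (Finset.mem_univ i)
    omega
  have h2 : ∀ i, e (Sum.inr i) < N + 1 := fun i => by
    have := Finset.single_le_sum (f := fun i => e (Sum.inr i)) (fun _ _ => Nat.zero_le _)
      (Finset.mem_univ i)
    omega
  refine ⟨(⟨fun i => ⟨e (Sum.inl i), h1 i⟩, ?_⟩, ⟨fun j => ⟨e (Sum.inr j), h2 j⟩, ?_⟩), ?_⟩
  · change ∑ i, e (Sum.inl i) ≤ N
    omega
  · change ∑ i, e (Sum.inr i) ≤ N
    omega
  · ext (i | j) <;> simp [joinExpo]

/-- The polynomial with coefficients `c` at the exponents of bounded degree. -/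
noncomputable def polyOfCoeffs {d k : ℕ} (c : Expo n d × Expo m k → ℝ) :
    MvPolynomial (Fin n ⊕ Fin m) ℝ :=
  ∑ a, MvPolynomial.monomial (joinExpo a) (c a)

lemma polyOfCoeffs_coeff {N : ℕ} {P : MvPolynomial (Fin n ⊕ Fin m) ℝ} (hP : P.totalDegree ≤ N) :
    polyOfCoeffs (fun a : Expo n N × Expo m N => MvPolynomial.coeff (joinExpo a) P) = P := by
  classical
  rw [polyOfCoeffs, ← Finset.sum_image (s := Finset.univ) (g := joinExpo)
    (f := fun e => MvPolynomial.monomial e (MvPolynomial.coeff e P)) joinExpo_injective.injOn]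
  conv_rhs => rw [MvPolynomial.as_sum P]
  refine (Finset.sum_subset (fun e he => ?_) fun e _ he => ?_).symm
  · obtain ⟨a, ha⟩ := exists_joinExpo_eq e (N := N) (by
      have := MvPolynomial.le_totalDegree he
      rw [Finsupp.sum_fintype _ _ fun _ => rfl] at this
      exact this.trans hP)
    exact Finset.mem_image.2 ⟨a, Finset.mem_univ a, ha⟩
  · rw [MvPolynomial.notMem_support_iff.1 he, map_zero]

/-- Integrating out the `y`-variables as a linear map on polynomials. -/
noncomputable def integYLin (n : ℕ) (ν : Measure (Fin m → ℝ)) :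
    MvPolynomial (Fin n ⊕ Fin m) ℝ →ₗ[ℝ] MvPolynomial (Fin n) ℝ :=
  (MvPolynomial.basisMonomials (Fin n ⊕ Fin m) ℝ).constr ℝ fun e =>
    MvPolynomial.monomial (xPart e) (∫ y, ∏ j : Fin m, (y j) ^ (e (Sum.inr j)) ∂ν)

lemma integYLin_monomial (ν : Measure (Fin m → ℝ)) (e : (Fin n ⊕ Fin m) →₀ ℕ) (c : ℝ) :
    integYLin n ν (MvPolynomial.monomial e c) =
      MvPolynomial.monomial (xPart e) (c * ∫ y, ∏ j : Fin m, (y j) ^ (e (Sum.inr j)) ∂ν) := by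
  have h := (MvPolynomial.basisMonomials (Fin n ⊕ Fin m) ℝ).constr_basis ℝ (fun e =>
    MvPolynomial.monomial (xPart e) (∫ y, ∏ j : Fin m, (y j) ^ (e (Sum.inr j)) ∂ν)) e
  rw [MvPolynomial.coe_basisMonomials] at h
  rw [← mul_one c, ← smul_eq_mul c, ← MvPolynomial.smul_monomial, map_smul, integYLin, h,
    MvPolynomial.smul_monomial]
  simp

/-- Substituting a point for the `x`-variables. -/
noncomputable def specializeX (x : Fin n → ℝ) :
    MvPolynomial (Fin n ⊕ Fin m) ℝ →ₐ[ℝ] MvPolynomial (Fin m) ℝ :=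
  MvPolynomial.aeval (Sum.elim (fun i => MvPolynomial.C (x i)) MvPolynomial.X)

lemma eval_specializeX (x : Fin n → ℝ) (y : Fin m → ℝ) (F : MvPolynomial (Fin n ⊕ Fin m) ℝ) :
    MvPolynomial.eval y (specializeX x F) = MvPolynomial.eval (Sum.elim x y) F := by
  induction F using MvPolynomial.induction_on with
  | C a => simp [specializeX, MvPolynomial.algebraMap_eq]
  | add f g hf hg => simp [hf, hg]
  | mul_X f i hf =>
    rw [map_mul, map_mul, hf, map_mul]
    cases i <;> simp [specializeX]

lemma momentsFinite.integrable_eval {ν : Measure (Fin m → ℝ)} (hmom : momentsFinite ν)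
    (x : Fin n → ℝ) (F : MvPolynomial (Fin n ⊕ Fin m) ℝ) :
    Integrable (fun y => MvPolynomial.eval (Sum.elim x y) F) ν := by
  simpa only [eval_specializeX] using hmom.integrable (specializeX x F)

lemma eval_integYLin {ν : Measure (Fin m → ℝ)} (hmom : momentsFinite ν) (x : Fin n → ℝ)
    (F : MvPolynomial (Fin n ⊕ Fin m) ℝ) :
    MvPolynomial.eval x (integYLin n ν F) = ∫ y, MvPolynomial.eval (Sum.elim x y) F ∂ν := by
  induction F using MvPolynomial.induction_on' with
  | monomial e c =>
    rw [integYLin_monomial, MvPolynomial.eval_monomial,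
      Finsupp.prod_fintype _ _ fun _ => pow_zero _, mul_right_comm, ← integral_const_mul]
    congr 1
    ext y
    rw [MvPolynomial.eval_monomial, Finsupp.prod_fintype _ _ fun _ => pow_zero _,
      Fintype.prod_sum_type]
    simp [xPart, mul_assoc]
  | add f g hf hg =>
    simp only [map_add, hf, hg]
    rw [integral_add (hmom.integrable_eval x f) (hmom.integrable_eval x g)]

lemma locMat_apply {ν : Measure (Fin m → ℝ)}
    (G : Matrix (Fin q) (Fin q) (MvPolynomial (Fin n ⊕ Fin m) ℝ))
    (S : (Fin n →₀ ℕ) → Matrix (Fin p) (Fin p) ℝ) {d k : ℕ}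
    (r c : (Expo n d × Expo m k) × (Fin p × Fin q)) (s t : ℝ) :
    s * t * locMat ν G S d k r c = riesz (fun α => S α r.2.1 c.2.1) (integYLin n ν
      (G r.2.2 c.2.2 * (MvPolynomial.monomial (joinExpo r.1) s *
        MvPolynomial.monomial (joinExpo c.1) t))) := by
  conv_rhs => rw [MvPolynomial.as_sum (G r.2.2 c.2.2)]
  simp only [Finset.sum_mul, map_sum, MvPolynomial.monomial_mul, integYLin_monomial,
    riesz_monomial, locMat, Matrix.of_apply, Finset.mul_sum]
  refine Finset.sum_congr rfl fun e _ => ?_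
  have hx : xPart (e + (joinExpo r.1 + joinExpo c.1)) =
      expF r.1.1.1 + expF c.1.1.1 + xPart e := by
    ext i
    simp [xPart, joinExpo, expF]
    ring
  have hy : ∀ j, (e + (joinExpo r.1 + joinExpo c.1)) (Sum.inr j) =
      e (Sum.inr j) + (r.1.2.1 j : ℕ) + (c.1.2.1 j : ℕ) := fun j => by
    simp [joinExpo, add_assoc]
  simp only [hx, hy]
  ring

/-- The quadratic form of the localizing matrix as a functional of polynomial vectors. -/
noncomputable def locForm (ν : Measure (Fin m → ℝ))
    (G : Matrix (Fin q) (Fin q) (MvPolynomial (Fin n ⊕ Fin m) ℝ))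
    (S : (Fin n →₀ ℕ) → Matrix (Fin p) (Fin p) ℝ)
    (P : Fin p → Fin q → MvPolynomial (Fin n ⊕ Fin m) ℝ) : ℝ :=
  ∑ i, ∑ j, riesz (fun α => S α i j) (integYLin n ν (∑ k, ∑ l, G k l * (P i k * P j l)))

lemma sum_block_comm {A P Q : Type*} [Fintype A] [Fintype P] [Fintype Q]
    (F : A × (P × Q) → A × (P × Q) → ℝ) :
    ∑ r, ∑ c, F r c = ∑ i, ∑ j, ∑ k, ∑ l, ∑ a, ∑ b, F (a, (i, k)) (b, (j, l)) := by
  rw [Fintype.sum_prod_type_right, Fintype.sum_prod_type]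
  refine Finset.sum_congr rfl fun i _ => ?_
  calc _ = ∑ k, ∑ a, ∑ j, ∑ l, ∑ b, F (a, (i, k)) (b, (j, l)) := by
        refine Finset.sum_congr rfl fun k _ => Finset.sum_congr rfl fun a _ => ?_
        rw [Fintype.sum_prod_type_right, Fintype.sum_prod_type]
    _ = ∑ k, ∑ j, ∑ a, ∑ l, ∑ b, F (a, (i, k)) (b, (j, l)) :=
        Finset.sum_congr rfl fun k _ => Finset.sum_comm
    _ = ∑ j, ∑ k, ∑ a, ∑ l, ∑ b, F (a, (i, k)) (b, (j, l)) := Finset.sum_comm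
    _ = _ := Finset.sum_congr rfl fun j _ => Finset.sum_congr rfl fun k _ => Finset.sum_comm

lemma sum_locMat_eq {ν : Measure (Fin m → ℝ)}
    (G : Matrix (Fin q) (Fin q) (MvPolynomial (Fin n ⊕ Fin m) ℝ))
    (S : (Fin n →₀ ℕ) → Matrix (Fin p) (Fin p) ℝ) {d k : ℕ}
    (c : (Expo n d × Expo m k) × (Fin p × Fin q) → ℝ) :
    star c ⬝ᵥ locMat ν G S d k *ᵥ c =
      locForm ν G S fun i k => polyOfCoeffs fun a => c (a, (i, k)) := by
  rw [dotProduct_mulVec_eq_sum]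
  simp only [locMat_apply, locForm, polyOfCoeffs, Finset.mul_sum, map_sum]
  rw [sum_block_comm]
  simp only [Finset.sum_mul, Finset.mul_sum, map_sum]
  refine Finset.sum_congr rfl fun i _ => Finset.sum_congr rfl fun j _ =>
    Finset.sum_congr rfl fun k _ => Finset.sum_congr rfl fun l _ => Finset.sum_comm

lemma locForm_nonneg {ν : Measure (Fin m → ℝ)}
    {G : Matrix (Fin q) (Fin q) (MvPolynomial (Fin n ⊕ Fin m) ℝ)}
    {S : (Fin n →₀ ℕ) → Matrix (Fin p) (Fin p) ℝ}
    (h : ∀ d k : ℕ, (locMat ν G S d k).PosSemidef)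
    (P : Fin p → Fin q → MvPolynomial (Fin n ⊕ Fin m) ℝ) : 0 ≤ locForm ν G S P := by
  set N := Finset.univ.sup fun i => Finset.univ.sup fun k => (P i k).totalDegree with hN
  have hle : ∀ i k, (P i k).totalDegree ≤ N := fun i k =>
    (Finset.le_sup (f := fun k => (P i k).totalDegree) (Finset.mem_univ k)).trans
      (Finset.le_sup (f := fun i => Finset.univ.sup fun k => (P i k).totalDegree)
        (Finset.mem_univ i))
  have h1 := (h N N).dotProduct_mulVec_nonneg
    fun a => MvPolynomial.coeff (joinExpo a.1) (P a.2.1 a.2.2)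
  rw [sum_locMat_eq] at h1
  simpa only [polyOfCoeffs_coeff (hle _ _)] using h1

end Localizing

section SignedIntegral

variable {Z Ω : Type*} [MeasurableSpace Z] [MeasurableSpace Ω]

lemma posPart_le_of_apply_eq_sub {s : SignedMeasure Z} {μ₁ μ₂ : Measure Z} [IsFiniteMeasure μ₁]
    [IsFiniteMeasure μ₂] (h : ∀ A, MeasurableSet A → s A = μ₁.real A - μ₂.real A) :
    s.toJordanDecomposition.posPart ≤ μ₁ := by
  obtain ⟨i, hi₁, hi₂, hi₃, hp, -⟩ := s.toJordanDecomposition_spec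
  refine Measure.le_iff.2 fun A hA => ?_
  rw [← ENNReal.toReal_le_toReal (measure_ne_top _ _) (measure_ne_top _ _)]
  change s.toJordanDecomposition.posPart.real A ≤ μ₁.real A
  rw [hp, SignedMeasure.toMeasureOfZeroLE_real_apply _ hi₂ hi₁ hA, h _ (hi₁.inter hA)]
  have := measureReal_mono (μ := μ₁) (Set.inter_subset_right : i ∩ A ⊆ A)
  linarith [measureReal_nonneg (μ := μ₂) (s := i ∩ A)]

lemma sInt_eq_sub {s : SignedMeasure Z} {μ₁ μ₂ : Measure Z} [IsFiniteMeasure μ₁]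
    [IsFiniteMeasure μ₂] (h : ∀ A, MeasurableSet A → s A = μ₁.real A - μ₂.real A)
    {f : Z → ℝ} (h₁ : Integrable f μ₁) (h₂ : Integrable f μ₂) :
    sInt s f = ∫ z, f z ∂μ₁ - ∫ z, f z ∂μ₂ := by
  have hpos := posPart_le_of_apply_eq_sub h
  have hneg : s.toJordanDecomposition.negPart ≤ μ₂ := by
    have := posPart_le_of_apply_eq_sub (s := -s) (μ₁ := μ₂) (μ₂ := μ₁) fun A hA => by
      rw [_root_.neg_apply, h A hA, neg_sub]
    rwa [SignedMeasure.toJordanDecomposition_neg, JordanDecomposition.neg_posPart] at this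
  have heq : s.toJordanDecomposition.posPart + μ₂ = s.toJordanDecomposition.negPart + μ₁ := by
    refine Measure.ext fun A hA => ?_
    rw [← ENNReal.toReal_eq_toReal_iff' (measure_ne_top _ _) (measure_ne_top _ _)]
    change (_ : Measure Z).real A = (_ : Measure Z).real A
    rw [measureReal_add_apply, measureReal_add_apply]
    have := s.apply_eq_posPart_real_sub_negPart_real hA
    linarith [h A hA]
  have hint : ∫ z, f z ∂(s.toJordanDecomposition.posPart + μ₂) =
      ∫ z, f z ∂(s.toJordanDecomposition.negPart + μ₁) := by rw [heq]
  rw [integral_add_measure (h₁.mono_measure hpos) h₂,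
    integral_add_measure (h₂.mono_measure hneg) h₁] at hint
  rw [sInt]
  linarith

lemma sInt_eq_integral_mul {s : SignedMeasure Z} {μ : Measure Ω} {X : Ω → Z}
    (hX : Measurable X) {D : Ω → ℝ} (hD : Integrable D μ)
    (h : ∀ A, MeasurableSet A → s A = ∫ ω in X ⁻¹' A, D ω ∂μ) {f : Z → ℝ} (hf : Measurable f)
    (hfD : Integrable (fun ω => f (X ω) * D ω) μ) :
    sInt s f = ∫ ω, f (X ω) * D ω ∂μ := by
  have hmeas : ∀ E : Ω → ℝ, Integrable E μ → AEMeasurable (fun ω => (E ω).toNNReal) μ :=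
    fun E hE => hE.aemeasurable.real_toNNReal
  have hfin : ∀ E : Ω → ℝ, Integrable E μ →
      IsFiniteMeasure ((μ.withDensity fun ω => ((E ω).toNNReal : ENNReal)).map X) := by
    intro E hE
    have : IsFiniteMeasure (μ.withDensity fun ω => ((E ω).toNNReal : ENNReal)) :=
      isFiniteMeasure_withDensity_ofReal hE.2
    infer_instance
  have hint : ∀ E : Ω → ℝ, Integrable E μ → Integrable (fun ω => f (X ω) * E ω) μ →
      Integrable f ((μ.withDensity fun ω => ((E ω).toNNReal : ENNReal)).map X) := by
    intro E hE hfE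
    rw [integrable_map_measure hf.aestronglyMeasurable hX.aemeasurable,
      integrable_withDensity_iff_integrable_smul₀ (hmeas E hE)]
    refine hfE.mono ((hmeas E hE).coe_nnreal_real.mul
      (hf.comp hX).aemeasurable).aestronglyMeasurable (ae_of_all _ fun ω => ?_)
    simp only [NNReal.smul_def, smul_eq_mul, norm_mul, Real.norm_eq_abs, Real.coe_toNNReal',
      Function.comp_apply]
    rw [mul_comm]
    refine mul_le_mul_of_nonneg_left ?_ (abs_nonneg _)
    rw [abs_of_nonneg (le_max_right _ _)]
    exact max_le (le_abs_self _) (abs_nonneg _)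
  have hval : ∀ E : Ω → ℝ, Integrable E μ →
      ∫ z, f z ∂((μ.withDensity fun ω => ((E ω).toNNReal : ENNReal)).map X) =
        ∫ ω, ((E ω).toNNReal : ℝ) * f (X ω) ∂μ := by
    intro E hE
    rw [integral_map hX.aemeasurable hf.aestronglyMeasurable,
      integral_withDensity_eq_integral_smul₀ (hmeas E hE)]
    rfl
  have hset : ∀ E : Ω → ℝ, Integrable E μ → ∀ A, MeasurableSet A →
      ((μ.withDensity fun ω => ((E ω).toNNReal : ENNReal)).map X).real A =
        ∫ ω in X ⁻¹' A, ((E ω).toNNReal : ℝ) ∂μ := by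
    intro E hE A hA
    rw [measureReal_def, Measure.map_apply hX hA, withDensity_apply _ (hX hA),
      integral_eq_lintegral_of_nonneg_ae (ae_of_all _ fun ω => NNReal.coe_nonneg _)
        (hmeas E hE).coe_nnreal_real.aestronglyMeasurable.restrict]
    simp only [ENNReal.ofReal_coe_nnreal]
  have hfnD : Integrable (fun ω => f (X ω) * (-D) ω) μ := by
    simpa using hfD.neg
  have h₁ := hfin D hD
  have h₂ := hfin (-D) hD.neg
  have hsplit : ∀ t : ℝ, (t.toNNReal : ℝ) - ((-t).toNNReal : ℝ) = t := fun t => by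
    rw [Real.coe_toNNReal', Real.coe_toNNReal']
    exact max_zero_sub_max_neg_zero_eq_self t
  have hreal : ∀ E : Ω → ℝ, Integrable E μ → Integrable (fun ω => ((E ω).toNNReal : ℝ)) μ :=
    fun E hE => hE.real_toNNReal
  rw [sInt_eq_sub (μ₁ := (μ.withDensity fun ω => ((D ω).toNNReal : ENNReal)).map X)
    (μ₂ := (μ.withDensity fun ω => (((-D) ω).toNNReal : ENNReal)).map X) (fun A hA => ?_)
    (hint D hD hfD) (hint (-D) hD.neg hfnD), hval D hD, hval (-D) hD.neg, ← integral_sub]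
  · refine integral_congr_ae (ae_of_all _ fun ω => ?_)
    simp only [Pi.neg_apply]
    rw [← sub_mul, hsplit, mul_comm]
  · have := hint D hD hfD
    rw [integrable_map_measure hf.aestronglyMeasurable hX.aemeasurable,
      integrable_withDensity_iff_integrable_smul₀ (hmeas D hD)] at this
    exact this
  · have := hint (-D) hD.neg hfnD
    rw [integrable_map_measure hf.aestronglyMeasurable hX.aemeasurable,
      integrable_withDensity_iff_integrable_smul₀ (hmeas (-D) hD.neg)] at this
    exact this
  · rw [h A hA, hset D hD A hA, hset (-D) hD.neg A hA,
      ← integral_sub (hreal D hD).integrableOn (hreal (-D) hD.neg).integrableOn]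
    simp only [Pi.neg_apply, hsplit]

end SignedIntegral

section RieszIntegral

variable {n : ℕ} {Ω : Type*} [MeasurableSpace Ω]

lemma integrable_eval_mul {μ : Measure Ω} {X : Ω → Fin n → ℝ} {D : Ω → ℝ}
    (hD : ∀ α : Fin n →₀ ℕ, Integrable (fun ω => (∏ l, X ω l ^ α l) * D ω) μ)
    (f : MvPolynomial (Fin n) ℝ) :
    Integrable (fun ω => MvPolynomial.eval (X ω) f * D ω) μ := by
  induction f using MvPolynomial.induction_on' with
  | monomial α c =>
    simp only [MvPolynomial.eval_monomial, Finsupp.prod_fintype _ _ fun _ => pow_zero _, mul_assoc]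
    exact (hD α).const_mul c
  | add f g hf hg =>
    simp only [map_add, add_mul]
    exact hf.add hg

lemma riesz_eq_integral {μ : Measure Ω} {X : Ω → Fin n → ℝ} {D : Ω → ℝ}
    (hD : ∀ α : Fin n →₀ ℕ, Integrable (fun ω => (∏ l, X ω l ^ α l) * D ω) μ)
    {s : (Fin n →₀ ℕ) → ℝ} (hs : ∀ α, s α = ∫ ω, (∏ l, X ω l ^ α l) * D ω ∂μ)
    (f : MvPolynomial (Fin n) ℝ) :
    riesz s f = ∫ ω, MvPolynomial.eval (X ω) f * D ω ∂μ := by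
  induction f using MvPolynomial.induction_on' with
  | monomial α c =>
    simp only [MvPolynomial.eval_monomial, Finsupp.prod_fintype _ _ fun _ => pow_zero _, mul_assoc]
    rw [integral_const_mul, ← hs, riesz_monomial]
  | add f g hf hg =>
    simp only [map_add, add_mul]
    rw [integral_add (integrable_eval_mul hD f) (integrable_eval_mul hD g), hf, hg]

end RieszIntegral

section LocalizedSupport

variable {n m p q : ℕ}

lemma integrable_of_ae_mem_isCompact {Z : Type*} [TopologicalSpace Z] [MeasurableSpace Z]
    {μ : Measure Z} [IsFiniteMeasure μ] {K : Set Z} (hK : IsCompact K) (hμ : ∀ᵐ z ∂μ, z ∈ K)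
    {f : Z → ℝ} (hf : Continuous f) (hfm : AEStronglyMeasurable f μ) : Integrable f μ := by
  obtain ⟨B, hB⟩ := hK.exists_bound_of_continuousOn hf.continuousOn
  refine Integrable.of_bound hfm B ?_
  filter_upwards [hμ] with z hz using hB z hz

lemma isCompact_box (n : ℕ) (C : ℝ) : IsCompact {x : Fin n → ℝ | ∀ i, |x i| ≤ C} := by
  have : {x : Fin n → ℝ | ∀ i, |x i| ≤ C} = Set.pi Set.univ fun _ => Set.Icc (-C) C := by
    ext x
    simp only [Set.mem_ofPred_eq, Set.mem_pi, Set.mem_univ, true_imp_iff, Set.mem_Icc, abs_le]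
  rw [this]
  exact isCompact_univ_pi fun _ => isCompact_Icc

/-- A polynomial `J` with `∫ h² J dτ ≥ 0` for every polynomial `h` is nonnegative on the support
of the compactly supported measure `τ`. -/
lemma eval_nonneg_of_mem_support {τ : Measure (Fin n → ℝ)} [IsFiniteMeasure τ] {C : ℝ}
    (hτ : ∀ᵐ x ∂τ, ∀ i, |x i| ≤ C) {J : MvPolynomial (Fin n) ℝ}
    (hJ : ∀ h : MvPolynomial (Fin n) ℝ, 0 ≤ ∫ x, MvPolynomial.eval x (h ^ 2 * J) ∂τ)
    {a : Fin n → ℝ} (ha : a ∈ τ.support) : 0 ≤ MvPolynomial.eval a J := by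
  set R : ℝ := ∑ l, (C + |a l|) ^ 2 + 1 with hR
  have hR0 : 0 < R := by positivity
  set t : (Fin n → ℝ) → ℝ := fun x => (∑ l, (x l - a l) ^ 2) / R with ht
  have htc : Continuous t := by fun_prop
  have ht0 : ∀ x, 0 ≤ t x := fun x => by positivity
  have ht1 : ∀ᵐ x ∂τ, t x ≤ 1 := by
    filter_upwards [hτ] with x hx
    rw [ht, div_le_one hR0, hR]
    refine le_add_of_le_of_nonneg (Finset.sum_le_sum fun l _ => ?_) zero_le_one
    rw [← sq_abs]
    exact pow_le_pow_left₀ (abs_nonneg _)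
      ((abs_sub _ _).trans (add_le_add_left (hx l) _)) 2
  refine nonneg_of_integral_mul_pow_nonneg (ν := τ) (F := fun x => MvPolynomial.eval x J)
    (ρ := fun x => (1 - t x) ^ 2) J.continuous_eval
    (integrable_of_ae_mem_isCompact (isCompact_box n C) hτ J.continuous_eval
      J.continuous_eval.aestronglyMeasurable) (by fun_prop)
    (ae_of_all _ fun x => sq_nonneg _) ?_ ?_ ?_ ?_ ?_
  · filter_upwards [ht1] with x hx
    nlinarith [ht0 x]
  · simp [ht]
  · intro r hr
    refine ⟨max (1 / 2) (1 - r ^ 2 / R), lt_max_of_lt_left (by norm_num),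
      max_lt (by norm_num) (by linarith [div_pos (pow_pos hr 2) hR0]), ?_⟩
    filter_upwards [ht1] with x hx hxr
    rw [Metric.mem_ball, dist_pi_lt_iff hr] at hxr
    push Not at hxr
    obtain ⟨l, hl⟩ := hxr
    have h1 : r ^ 2 / R ≤ t x := by
      refine div_le_div_of_nonneg_right ?_ hR0.le
      refine le_trans ?_ (Finset.single_le_sum (f := fun l => (x l - a l) ^ 2)
        (fun _ _ => sq_nonneg _) (Finset.mem_univ l))
      rw [← sq_abs (x l - a l), ← Real.dist_eq]
      exact pow_le_pow_left₀ hr.le hl 2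
    refine le_trans ?_ (le_max_right _ _)
    nlinarith [ht0 x]
  · intro N
    refine (hJ ((1 - MvPolynomial.C R⁻¹ *
      ∑ l, (MvPolynomial.X l - MvPolynomial.C (a l)) ^ 2) ^ N)).trans (le_of_eq ?_)
    refine integral_congr_ae (ae_of_all _ fun x => ?_)
    simp only [map_mul, map_pow, map_sub, map_one, map_sum, MvPolynomial.eval_C,
      MvPolynomial.eval_X, ht]
    rw [mul_comm, div_eq_inv_mul, pow_right_comm]
  · exact fun U hU haU => (Measure.mem_support_iff_forall a).1 ha U (hU.mem_nhds haU)

lemma locForm_eq_integral {Ω : Type*} [MeasurableSpace Ω] {μ : Measure Ω} {X : Ω → Fin n → ℝ}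
    {D : Fin p → Fin p → Ω → ℝ}
    (hD : ∀ i j (α : Fin n →₀ ℕ), Integrable (fun ω => (∏ l, X ω l ^ α l) * D i j ω) μ)
    {S : (Fin n →₀ ℕ) → Matrix (Fin p) (Fin p) ℝ}
    (hS : ∀ α i j, S α i j = ∫ ω, (∏ l, X ω l ^ α l) * D i j ω ∂μ) (ν : Measure (Fin m → ℝ))
    (G : Matrix (Fin q) (Fin q) (MvPolynomial (Fin n ⊕ Fin m) ℝ))
    (P : Fin p → Fin q → MvPolynomial (Fin n ⊕ Fin m) ℝ) :
    locForm ν G S P = ∫ ω, ∑ i, ∑ j, MvPolynomial.eval (X ω)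
      (integYLin n ν (∑ k, ∑ l, G k l * (P i k * P j l))) * D i j ω ∂μ := by
  rw [locForm, integral_finsetSum _ fun i _ => integrable_finsetSum _ fun j _ =>
    integrable_eval_mul (hD i j) _]
  refine Finset.sum_congr rfl fun i _ => ?_
  rw [integral_finsetSum _ fun j _ => integrable_eval_mul (hD i j) _]
  exact Finset.sum_congr rfl fun j _ => riesz_eq_integral (hD i j) (fun α => hS α i j) _

lemma isHermitian_evalMat {σ ι : Type*} {G : Matrix ι ι (MvPolynomial σ ℝ)} (hGs : G.IsSymm)
    (x : σ → ℝ) : (evalMat x G).IsHermitian := by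
  rw [Matrix.IsHermitian, Matrix.conjTranspose_eq_transpose_of_trivial, evalMat,
    ← Matrix.transpose_map, hGs]

lemma posSemidef_of_mem_support {Y : Set (Fin m → ℝ)} {ν : Measure (Fin m → ℝ)}
    (hsupp : hasSupport ν Y) (hmom : momentsFinite ν) (hcar : Carleman ν)
    {G : Matrix (Fin q) (Fin q) (MvPolynomial (Fin n ⊕ Fin m) ℝ)} (hGs : G.IsSymm)
    {S : (Fin n →₀ ℕ) → Matrix (Fin p) (Fin p) ℝ}
    (hloc : ∀ d k : ℕ, (locMat ν G S d k).PosSemidef) {C : ℝ}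
    {μ : Measure ((Fin n → ℝ) × (Fin p → Fin p → ℝ))} [IsFiniteMeasure μ]
    (hμ : ∀ᵐ e ∂μ, e ∈ boxStates n p C)
    (hS : ∀ α i j, S α i j = ∫ e, (∏ l, e.1 l ^ α l) * e.2 i j ∂μ)
    {x : Fin n → ℝ} (hx : x ∈ (μ.map Prod.fst).support) {y : Fin m → ℝ} (hy : y ∈ Y) :
    (evalMat (Sum.elim x y) G).PosSemidef := by
  have hint : ∀ i j (f : MvPolynomial (Fin n) ℝ),
      Integrable (fun e => MvPolynomial.eval e.1 f * e.2 i j) μ := fun i j f => by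
    have hc : Continuous fun e : (Fin n → ℝ) × (Fin p → Fin p → ℝ) =>
        MvPolynomial.eval e.1 f * e.2 i j :=
      (f.continuous_eval.comp continuous_fst).mul (by fun_prop)
    exact integrable_of_ae_mem_isCompact (isCompact_boxStates C) hμ hc hc.aestronglyMeasurable
  have hmon : ∀ i j (α : Fin n →₀ ℕ),
      Integrable (fun e => (∏ l, e.1 l ^ α l) * e.2 i j) μ := fun i j α => by
    have hα := hint i j (MvPolynomial.monomial α 1)
    simpa only [MvPolynomial.eval_monomial, one_mul,
      Finsupp.prod_fintype _ _ fun _ => pow_zero _] using hα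
  refine Matrix.PosSemidef.of_dotProduct_mulVec_nonneg (isHermitian_evalMat hGs _) fun v => ?_
  set F : MvPolynomial (Fin n ⊕ Fin m) ℝ :=
    ∑ k, ∑ l, G k l * (MvPolynomial.C (v k) * MvPolynomial.C (v l)) with hF
  have hFv : star v ⬝ᵥ evalMat (Sum.elim x y) G *ᵥ v =
      MvPolynomial.eval y (specializeX x F) := by
    rw [dotProduct_mulVec_eq_sum, eval_specializeX, hF]
    simp only [map_sum, map_mul, MvPolynomial.eval_C, evalMat, Matrix.map_apply]
    exact Finset.sum_congr rfl fun k _ => Finset.sum_congr rfl fun l _ => mul_comm _ _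
  rw [hFv]
  refine eval_nonneg_of_integral_sq_nonneg hsupp hcar hmom (fun g => ?_) hy
  have hJ : ∀ u, MvPolynomial.eval u
      (integYLin n ν (MvPolynomial.rename Sum.inr g ^ 2 * F)) =
        ∫ y, MvPolynomial.eval y (g ^ 2 * specializeX u F) ∂ν := fun u => by
    rw [eval_integYLin hmom]
    refine integral_congr_ae (ae_of_all _ fun y => ?_)
    simp only [map_mul, map_pow, eval_specializeX, MvPolynomial.eval_rename, Sum.elim_comp_inr]
  rw [← hJ]
  have hfst : AEMeasurable (Prod.fst : (Fin n → ℝ) × (Fin p → Fin p → ℝ) → _) μ :=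
    measurable_fst.aemeasurable
  refine eval_nonneg_of_mem_support (τ := μ.map Prod.fst) (C := C) ?_ (fun h => ?_) hx
  · refine (ae_map_iff hfst (isCompact_box n C).measurableSet).2 ?_
    filter_upwards [hμ] with e he using he.1
  rw [integral_map hfst (MvPolynomial.continuous_eval _).aestronglyMeasurable]
  have hdiag : ∀ i, 0 ≤ ∫ e, MvPolynomial.eval e.1
      (h ^ 2 * integYLin n ν (MvPolynomial.rename Sum.inr g ^ 2 * F)) * e.2 i i ∂μ := by
    intro i
    have hnn := locForm_nonneg hloc fun i' k => if i' = i then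
      MvPolynomial.rename Sum.inl h * MvPolynomial.rename Sum.inr g * MvPolynomial.C (v k) else 0
    rw [locForm_eq_integral hmon hS] at hnn
    refine hnn.trans (le_of_eq (integral_congr_ae (ae_of_all _ fun e => ?_)))
    simp only
    rw [Finset.sum_eq_single i (fun i' _ hi' => by simp [hi']) (by simp),
      Finset.sum_eq_single i (fun j' _ hj' => by simp [hj']) (by simp)]
    simp only [if_true, map_mul, map_pow]
    rw [eval_integYLin hmom, eval_integYLin hmom, ← integral_const_mul]
    congr 2
    ext y
    simp only [map_mul, map_pow, map_sum, MvPolynomial.eval_rename, Sum.elim_comp_inr,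
      Sum.elim_comp_inl, MvPolynomial.eval_C, hF, Finset.mul_sum]
    exact Finset.sum_congr rfl fun k _ => Finset.sum_congr rfl fun l _ => by ring
  refine (Finset.sum_nonneg fun i (_ : i ∈ Finset.univ) => hdiag i).trans (le_of_eq ?_)
  rw [← integral_finsetSum _ fun i _ => hint i i _]
  refine integral_congr_ae ?_
  filter_upwards [hμ] with e he
  rw [← Finset.mul_sum, he.2.2.2.1, mul_one]

end LocalizedSupport

section ExistsRepresentation

variable {n m p q : ℕ}

lemma exists_representing_of_psd {Y : Set (Fin m → ℝ)} {ν : Measure (Fin m → ℝ)}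
    (hsupp : hasSupport ν Y) (hmom : momentsFinite ν) (hcar : Carleman ν)
    {G : Matrix (Fin q) (Fin q) (MvPolynomial (Fin n ⊕ Fin m) ℝ)} (hGs : G.IsSymm)
    {S : (Fin n →₀ ℕ) → Matrix (Fin p) (Fin p) ℝ} (hsym : ∀ α, (S α).IsSymm)
    {C C₀ : ℝ} (hC : 0 < C) (hM : MomentPSD S)
    (hloc : ∀ d k : ℕ, (locMat ν G S d k).PosSemidef)
    (hb : ∀ α : Fin n →₀ ℕ, specNorm (S α) ≤ C₀ * C ^ (∑ i, α i)) :
    ∃ Φ : Fin p → Fin p → SignedMeasure (Fin n → ℝ),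
      (∀ i j, Φ i j = Φ j i) ∧
      (∀ A : Set (Fin n → ℝ), MeasurableSet A → ∀ v : Fin p → ℝ,
        0 ≤ ∑ i, ∑ j, v i * v j * Φ i j A) ∧
      (∀ i j, ∀ A : Set (Fin n → ℝ), MeasurableSet A →
        A ∩ ({x | ∀ y ∈ Y, (evalMat (Sum.elim x y) G).PosSemidef} ∩
          {x | ∀ i', |x i'| ≤ C}) = ∅ →
        Φ i j A = 0) ∧
      (∀ (α : Fin n →₀ ℕ) (i j : Fin p),
        S α i j = sInt (Φ i j) (fun x => ∏ l, x l ^ α l)) := by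
  obtain ⟨μ, hfin, hμ, hS⟩ := (hM.isPosSeq hsym).exists_measure hC
    fun α i j => (abs_apply_le_specNorm (S α) i j).trans (hb α)
  have hcont : ∀ i j, Continuous fun e : (Fin n → ℝ) × (Fin p → Fin p → ℝ) => e.2 i j :=
    fun i j => by fun_prop
  have hint : ∀ i j, Integrable (fun e : (Fin n → ℝ) × (Fin p → Fin p → ℝ) => e.2 i j) μ :=
    fun i j => integrable_of_ae_mem_isCompact (isCompact_boxStates C) hμ (hcont i j)
      (hcont i j).aestronglyMeasurable
  have happly : ∀ i j A, MeasurableSet A →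
      (μ.withDensityᵥ fun e => e.2 i j).map Prod.fst A = ∫ e in Prod.fst ⁻¹' A, e.2 i j ∂μ :=
    fun i j A hA => by
      rw [VectorMeasure.map_apply _ measurable_fst hA,
        withDensityᵥ_apply (hint i j) (measurable_fst hA)]
  refine ⟨fun i j => (μ.withDensityᵥ fun e => e.2 i j).map Prod.fst, fun i j => ?_,
    fun A hA v => ?_, fun i j A hA hAK => ?_, fun α i j => ?_⟩
  · refine VectorMeasure.ext fun A hA => ?_
    rw [happly i j A hA, happly j i A hA]
    refine integral_congr_ae (ae_restrict_of_ae ?_)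
    filter_upwards [hμ] with e he using he.2.1 i j
  · simp only [happly _ _ A hA]
    have hsum : ∑ i, ∑ j, v i * v j * ∫ e in Prod.fst ⁻¹' A, e.2 i j ∂μ =
        ∫ e in Prod.fst ⁻¹' A, ∑ i, ∑ j, v i * v j * e.2 i j ∂μ := by
      rw [integral_finsetSum _ fun i _ => integrable_finsetSum _ fun j _ =>
        (hint i j).integrableOn.const_mul _]
      refine Finset.sum_congr rfl fun i _ => ?_
      rw [integral_finsetSum _ fun j _ => (hint i j).integrableOn.const_mul _]
      exact Finset.sum_congr rfl fun j _ => (integral_const_mul _ _).symm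
    rw [hsum]
    refine integral_nonneg_of_ae (ae_restrict_of_ae ?_)
    filter_upwards [hμ] with e he using he.2.2.1 v
  · rw [happly i j A hA]
    refine setIntegral_measure_zero _ ?_
    have hsuppae : ∀ᵐ e ∂μ, e.1 ∈ (μ.map Prod.fst).support :=
      ae_of_ae_map measurable_fst.aemeasurable Measure.support_mem_ae
    refine measure_mono_null (fun e he => ?_) (ae_iff.1 (hsuppae.and hμ))
    rintro ⟨hx, hbox⟩
    have : e.1 ∈ (∅ : Set (Fin n → ℝ)) := by
      rw [← hAK]
      exact ⟨he, fun y hy => posSemidef_of_mem_support hsupp hmom hcar hGs hloc hμ hS hx hy,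
        hbox.1⟩
    exact this
  · have hc : Continuous fun x : Fin n → ℝ => ∏ l, x l ^ α l := by fun_prop
    have hc' := (hc.comp continuous_fst).mul (hcont i j)
    rw [sInt_eq_integral_mul measurable_fst (hint i j) (happly i j) hc.measurable
      (integrable_of_ae_mem_isCompact (isCompact_boxStates C) hμ hc' hc'.aestronglyMeasurable)]
    exact hS α i j

end ExistsRepresentation

section MatrixDensity

variable {p : ℕ} {Z : Type*} [MeasurableSpace Z]

/-- A positive semidefinite matrix-valued measure supported on `K` has a positive semidefinite
density with respect to a finite measure supported on `K`. -/
lemma exists_matrix_density {Φ : Fin p → Fin p → SignedMeasure Z} (hΦs : ∀ i j, Φ i j = Φ j i)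
    (hΦp : ∀ A : Set Z, MeasurableSet A → ∀ v : Fin p → ℝ, 0 ≤ ∑ i, ∑ j, v i * v j * Φ i j A)
    {K : Set Z} (hK : MeasurableSet K)
    (hΦK : ∀ i j, ∀ A : Set Z, MeasurableSet A → A ∩ K = ∅ → Φ i j A = 0) :
    ∃ (μ : Measure Z) (D : Fin p → Fin p → Z → ℝ), IsFiniteMeasure μ ∧ (∀ᵐ x ∂μ, x ∈ K) ∧
      (∀ i j, Integrable (D i j) μ) ∧
      (∀ i j, ∀ A, MeasurableSet A → Φ i j A = ∫ x in A, D i j x ∂μ) ∧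
      ∀ᵐ x ∂μ, (Matrix.of fun i j => D i j x).PosSemidef := by
  set μ : Measure Z := (∑ i, ∑ j, (Φ i j).totalVariation).restrict K with hμ
  have hac : ∀ i j, Φ i j ≪ᵥ μ.toENNRealVectorMeasure := by
    intro i j
    refine VectorMeasure.AbsolutelyContinuous.mk fun A hA hA0 => ?_
    rw [Measure.toENNRealVectorMeasure_apply_measurable hA, hμ, Measure.restrict_apply hA] at hA0
    simp only [Measure.coe_finsetSum, Finset.sum_apply, Finset.sum_eq_zero_iff, Finset.mem_univ,
      true_imp_iff] at hA0
    rw [← Set.inter_union_sdiff A K, VectorMeasure.of_union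
      (Set.disjoint_sdiff_right.mono_left Set.inter_subset_right) (hA.inter hK) (hA.diff hK),
      SignedMeasure.null_of_totalVariation_zero _ (hA0 i j),
      hΦK i j _ (hA.diff hK) Set.sdiff_inter_self, add_zero]
  have hint : ∀ i j, Integrable ((Φ i j).rnDeriv μ) μ :=
    fun i j => SignedMeasure.integrable_rnDeriv _ _
  have happly : ∀ i j, ∀ A, MeasurableSet A → Φ i j A = ∫ x in A, (Φ i j).rnDeriv μ x ∂μ :=
    fun i j A hA => by
      rw [← withDensityᵥ_apply (hint i j) hA, SignedMeasure.withDensityᵥ_rnDeriv_eq _ _ (hac i j)]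
  refine ⟨μ, fun i j => (Φ i j).rnDeriv μ, inferInstance, ae_restrict_mem hK, hint, happly, ?_⟩
  have hv : ∀ v : Fin p → ℝ, ∀ᵐ x ∂μ, 0 ≤ ∑ i, ∑ j, v i * v j * (Φ i j).rnDeriv μ x := by
    intro v
    refine ae_nonneg_of_forall_setIntegral_nonneg (integrable_finsetSum _ fun i _ =>
      integrable_finsetSum _ fun j _ => (hint i j).const_mul _) fun A hA _ => ?_
    rw [integral_finsetSum _ fun i _ => integrable_finsetSum _ fun j _ =>
      (hint i j).integrableOn.const_mul _]
    refine (hΦp A hA v).trans (le_of_eq (Finset.sum_congr rfl fun i _ => ?_))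
    rw [integral_finsetSum _ fun j _ => (hint i j).integrableOn.const_mul _]
    exact Finset.sum_congr rfl fun j _ => by rw [integral_const_mul, happly i j A hA]
  filter_upwards [ae_all_iff.2 fun k => hv (TopologicalSpace.denseSeq (Fin p → ℝ) k)] with x hx
  refine Matrix.PosSemidef.of_dotProduct_mulVec_nonneg ?_ fun v => ?_
  · ext i j
    simp only [Matrix.conjTranspose_apply, Matrix.of_apply, star_trivial, hΦs j i]
  · rw [dotProduct_mulVec_eq_sum]
    refine (TopologicalSpace.denseRange_denseSeq (Fin p → ℝ)).induction_on
      (p := fun v => 0 ≤ ∑ i, ∑ j, v i * v j * (Φ i j).rnDeriv μ x) v ?_ hx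
    exact isClosed_le continuous_const (by fun_prop)

lemma sum_mul_nonneg_of_posSemidef {q : ℕ} {A : Matrix (Fin p) (Fin p) ℝ}
    {B : Matrix (Fin q) (Fin q) ℝ} (hA : A.PosSemidef) (hB : B.PosSemidef)
    (w : Fin p → Fin q → ℝ) :
    0 ≤ ∑ i, ∑ j, (∑ k, ∑ l, B k l * (w i k * w j l)) * A i j := by
  have h := (hA.kronecker hB).dotProduct_mulVec_nonneg fun a => w a.1 a.2
  rw [dotProduct_mulVec_eq_sum] at h
  simp only [Fintype.sum_prod_type, Matrix.kroneckerMap_apply] at h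
  refine h.trans (le_of_eq (Finset.sum_congr rfl fun i _ => ?_))
  rw [Finset.sum_comm]
  refine Finset.sum_congr rfl fun j _ => ?_
  simp only [Finset.sum_mul]
  exact Finset.sum_congr rfl fun k _ => Finset.sum_congr rfl fun l _ => by ring

end MatrixDensity

section Necessity

variable {n m p q : ℕ}

lemma isClosed_posSemidef_evalMat (Y : Set (Fin m → ℝ))
    {G : Matrix (Fin q) (Fin q) (MvPolynomial (Fin n ⊕ Fin m) ℝ)} (hGs : G.IsSymm) :
    IsClosed {x : Fin n → ℝ | ∀ y ∈ Y, (evalMat (Sum.elim x y) G).PosSemidef} := by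
  have h : {x : Fin n → ℝ | ∀ y ∈ Y, (evalMat (Sum.elim x y) G).PosSemidef} =
      ⋂ y ∈ Y, ⋂ v : Fin q → ℝ, {x | 0 ≤ ∑ k, ∑ l, v k * v l *
        MvPolynomial.eval (Sum.elim x y) (G k l)} := by
    ext x
    simp only [Set.mem_ofPred_eq, Set.mem_iInter]
    refine forall₂_congr fun y _ => ⟨fun hx v => ?_, fun hx => ?_⟩
    · have := hx.dotProduct_mulVec_nonneg v
      rwa [dotProduct_mulVec_eq_sum] at this
    · refine Matrix.PosSemidef.of_dotProduct_mulVec_nonneg (isHermitian_evalMat hGs _) fun v => ?_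
      rw [dotProduct_mulVec_eq_sum]
      exact hx v
  rw [h]
  refine isClosed_biInter fun y _ => isClosed_iInter fun v =>
    isClosed_le continuous_const (continuous_finsetSum _ fun k _ => continuous_finsetSum _
      fun l _ => continuous_const.mul ((MvPolynomial.continuous_eval _).comp
        (continuous_pi fun i => ?_)))
  cases i with
  | inl i => exact continuous_apply i
  | inr j => exact continuous_const

lemma isHermitian_locMat {ν : Measure (Fin m → ℝ)}
    {G : Matrix (Fin q) (Fin q) (MvPolynomial (Fin n ⊕ Fin m) ℝ)} (hGs : G.IsSymm)
    {S : (Fin n →₀ ℕ) → Matrix (Fin p) (Fin p) ℝ} (hsym : ∀ α, (S α).IsSymm) (d k : ℕ) :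
    (locMat ν G S d k).IsHermitian := by
  ext r c
  have h1 := locMat_apply (ν := ν) G S r c 1 1
  have h2 := locMat_apply (ν := ν) G S c r 1 1
  rw [one_mul, one_mul] at h1 h2
  rw [Matrix.conjTranspose_apply, star_trivial, h1, h2, hGs.apply r.2.2 c.2.2]
  simp only [(hsym _).apply r.2.1 c.2.1]
  rw [mul_comm (MvPolynomial.monomial (joinExpo c.1) 1)]

lemma norm_prod_pow_le {C : ℝ} {x : Fin n → ℝ} (hx : ∀ i, |x i| ≤ C) (α : Fin n →₀ ℕ) :
    ‖∏ l, x l ^ α l‖ ≤ C ^ ∑ l, α l := by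
  rw [norm_prod, ← Finset.prod_pow_eq_pow_sum]
  refine Finset.prod_le_prod (fun l _ => norm_nonneg _) fun l _ => ?_
  rw [norm_pow]
  exact pow_le_pow_left₀ (norm_nonneg _) (hx l) _

/-- A moment sequence with positive semidefinite density on `X ∩ [-C, C]ⁿ` has positive
semidefinite moment and localizing matrices and is exponentially bounded. -/
lemma psd_of_density {Y : Set (Fin m → ℝ)} {ν : Measure (Fin m → ℝ)} (hsupp : hasSupport ν Y)
    (hmom : momentsFinite ν) {G : Matrix (Fin q) (Fin q) (MvPolynomial (Fin n ⊕ Fin m) ℝ)}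
    (hGs : G.IsSymm) {S : (Fin n →₀ ℕ) → Matrix (Fin p) (Fin p) ℝ} (hsym : ∀ α, (S α).IsSymm)
    {C : ℝ} (hC : 0 < C) {μ : Measure (Fin n → ℝ)} {D : Fin p → Fin p → (Fin n → ℝ) → ℝ}
    (hμX : ∀ᵐ x ∂μ, ∀ y ∈ Y, (evalMat (Sum.elim x y) G).PosSemidef)
    (hμC : ∀ᵐ x ∂μ, ∀ i, |x i| ≤ C) (hD : ∀ i j, Integrable (D i j) μ)
    (hmon : ∀ i j (α : Fin n →₀ ℕ), Integrable (fun x => (∏ l, x l ^ α l) * D i j x) μ)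
    (hDp : ∀ᵐ x ∂μ, (Matrix.of fun i j => D i j x).PosSemidef)
    (hS : ∀ α i j, S α i j = ∫ x, (∏ l, x l ^ α l) * D i j x ∂μ) :
    MomentPSD S ∧ (∀ d k : ℕ, (locMat ν G S d k).PosSemidef) ∧
      ∃ C₀ > (0 : ℝ), ∀ α : Fin n →₀ ℕ, specNorm (S α) ≤ C₀ * C ^ (∑ i, α i) := by
  refine ⟨fun N idx => ?_, fun d k => ?_, ?_⟩
  · refine Matrix.PosSemidef.of_dotProduct_mulVec_nonneg ?_ fun c => ?_
    · ext a b
      rw [Matrix.conjTranspose_apply, star_trivial, Matrix.of_apply, Matrix.of_apply,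
        add_comm, (hsym _).apply]
    · rw [dotProduct_mulVec_eq_sum]
      simp only [Matrix.of_apply]
      rw [sum_momentMatrix_eq]
      simp only [riesz_eq_integral (X := fun x => x) (hmon _ _) (fun α => hS α _ _)]
      simp only [← integral_finsetSum _ fun j _ =>
        integrable_eval_mul (X := fun x => x) (hmon _ j) _]
      rw [← integral_finsetSum _ fun i _ => integrable_finsetSum _ fun j _ =>
        integrable_eval_mul (X := fun x => x) (hmon i j) _]
      refine integral_nonneg_of_ae ?_
      filter_upwards [hDp] with x hx
      have := hx.dotProduct_mulVec_nonneg fun i =>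
        MvPolynomial.eval x (∑ a, MvPolynomial.monomial (idx a) (c (a, i)))
      rw [dotProduct_mulVec_eq_sum] at this
      simpa only [Pi.zero_apply, map_mul, Matrix.of_apply] using this
  · refine Matrix.PosSemidef.of_dotProduct_mulVec_nonneg (isHermitian_locMat hGs hsym d k)
      fun c => ?_
    rw [sum_locMat_eq]
    set P : Fin p → Fin q → MvPolynomial (Fin n ⊕ Fin m) ℝ :=
      fun i k => polyOfCoeffs fun a => c (a, (i, k))
    rw [locForm_eq_integral (X := fun x => x) hmon hS]
    refine integral_nonneg_of_ae ?_
    filter_upwards [hDp, hμX] with x hx hxY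
    have hY : ∀ᵐ y ∂ν, y ∈ Y := mem_ae_iff.2 hsupp.1
    simp only [Pi.zero_apply, eval_integYLin hmom, ← integral_mul_const]
    simp only [← integral_finsetSum _ fun j _ => (hmom.integrable_eval x _).mul_const _]
    rw [← integral_finsetSum _ fun i _ => integrable_finsetSum _ fun j _ =>
      (hmom.integrable_eval x _).mul_const _]
    refine integral_nonneg_of_ae ?_
    filter_upwards [hY] with y hy
    have := sum_mul_nonneg_of_posSemidef hx (hxY y hy)
      fun i k => MvPolynomial.eval (Sum.elim x y) (P i k)
    simpa only [Pi.zero_apply, map_sum, map_mul, Matrix.of_apply, evalMat, Matrix.map_apply]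
      using this
  · refine ⟨1 + ∑ i, ∑ j, ∫ x, |D i j x| ∂μ, ?_, fun α => ?_⟩
    · have : 0 ≤ ∑ i, ∑ j, ∫ x, |D i j x| ∂μ := Finset.sum_nonneg fun i _ =>
        Finset.sum_nonneg fun j _ => integral_nonneg fun x => abs_nonneg _
      linarith
    · rw [add_mul, one_mul, Finset.sum_mul]
      refine (specNorm_le_sum_abs _).trans (le_add_of_nonneg_of_le (pow_nonneg hC.le _)
        (Finset.sum_le_sum fun i _ => ?_))
      rw [Finset.sum_mul]
      refine Finset.sum_le_sum fun j _ => ?_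
      rw [hS, ← integral_mul_const]
      refine (abs_integral_le_integral_abs).trans (integral_mono_ae (hmon i j α).abs
        ((hD i j).abs.mul_const _) ?_)
      filter_upwards [hμC] with x hx
      rw [abs_mul, mul_comm]
      exact mul_le_mul_of_nonneg_left (norm_prod_pow_le hx α) (abs_nonneg _)

end Necessity

/-- exponentially bounded matrix moment problem on `X ∩ [−C,C]ⁿ`. -/
theorem matrix_moment_problem {n m p q : ℕ}
    (Y : Set (Fin m → ℝ)) (hY : IsClosed Y)
    (ν : Measure (Fin m → ℝ)) (hsupp : hasSupport ν Y) (hmom : momentsFinite ν)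
    (hcar : Carleman ν)
    (G : Matrix (Fin q) (Fin q) (MvPolynomial (Fin n ⊕ Fin m) ℝ)) (hGs : G.IsSymm)
    (S : (Fin n →₀ ℕ) → Matrix (Fin p) (Fin p) ℝ) (hsym : ∀ α, (S α).IsSymm)
    (C : ℝ) (hC : 0 < C) :
    (∃ Φ : Fin p → Fin p → MeasureTheory.SignedMeasure (Fin n → ℝ),
        (∀ i j, Φ i j = Φ j i) ∧
        (∀ A : Set (Fin n → ℝ), MeasurableSet A → ∀ v : Fin p → ℝ,
          0 ≤ ∑ i, ∑ j, v i * v j * Φ i j A) ∧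
        (∀ i j, ∀ A : Set (Fin n → ℝ), MeasurableSet A →
          A ∩ ({x | ∀ y ∈ Y, (evalMat (Sum.elim x y) G).PosSemidef} ∩
            {x | ∀ i', |x i'| ≤ C}) = ∅ →
          Φ i j A = 0) ∧
        (∀ (α : Fin n →₀ ℕ) (i j : Fin p),
          S α i j = sInt (Φ i j) (fun x => ∏ l, x l ^ α l))) ↔
      (MomentPSD S ∧ (∀ d k : ℕ, (locMat ν G S d k).PosSemidef) ∧
        ∃ C₀ > (0 : ℝ), ∀ α : Fin n →₀ ℕ, specNorm (S α) ≤ C₀ * C ^ (∑ i, α i)) := by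
  constructor
  · rintro ⟨Φ, hΦs, hΦp, hΦK, hΦS⟩
    obtain ⟨μ, D, hfin, hμK, hD, hΦD, hDp⟩ := exists_matrix_density hΦs hΦp
      ((isClosed_posSemidef_evalMat Y hGs).measurableSet.inter
        (isCompact_box n C).measurableSet) hΦK
    have hμC : ∀ᵐ x ∂μ, ∀ i, |x i| ≤ C := by filter_upwards [hμK] with x hx using hx.2
    have hmon : ∀ i j (α : Fin n →₀ ℕ), Integrable (fun x => (∏ l, x l ^ α l) * D i j x) μ :=
      fun i j α => (hD i j).bdd_mul (c := C ^ ∑ l, α l)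
        (Continuous.aestronglyMeasurable (by fun_prop)) (by
          filter_upwards [hμC] with x hx using norm_prod_pow_le hx α)
    refine psd_of_density hsupp hmom hGs hsym hC
      (by filter_upwards [hμK] with x hx using hx.1) hμC hD hmon hDp fun α i j => ?_
    have hc : Continuous fun x : Fin n → ℝ => ∏ l, x l ^ α l := by fun_prop
    rw [hΦS α i j, sInt_eq_integral_mul measurable_id (hD i j) (hΦD i j) hc.measurable
      (hmon i j α)]
    rfl
  · rintro ⟨hM, hloc, C₀, -, hb⟩
    exact exists_representing_of_psd hsupp hmom hcar hGs hsym hC hM hloc hb
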